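/- arXiv:1402.2064 — 2 statements merged into one kernel-verified Lean document; each statement's English description precedes it below -/
import Mathlib

section
/- Let d ≥ 1 and let H be a finite hypergraph of d-intervals. Then τ(H) ≤ (d² − d + 1)·ν(H). -/
/-- A `d`-interval: a union of at most `d` pairwise disjoint closed intervals
on the real line. -/
def IsDInterval (d : ℕ) (h : Set ℝ) : Prop :=
  ∃ (n : ℕ) (a b : Fin n → ℝ), n ≤ d ∧ (∀ i, a i ≤ b i) ∧
    (Set.univ : Set (Fin n)).PairwiseDisjoint (fun i => Set.Icc (a i) (b i)) ∧
    h = ⋃ i, Set.Icc (a i) (b i)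

/-- The covering (transversal) number: the minimum size of a finite set of
points meeting every edge. -/
noncomputable def tau {α : Type*} (H : Set (Set α)) : ℕ :=
  sInf {n | ∃ C : Finset α, (∀ e ∈ H, ∃ x ∈ C, x ∈ e) ∧ C.card = n}

/-- The matching number: the maximum size of a set of pairwise disjoint edges. -/
noncomputable def nu {α : Type*} (H : Set (Set α)) : ℕ :=
  sSup {n | ∃ M : Finset (Set α), ↑M ⊆ H ∧
    (M : Set (Set α)).PairwiseDisjoint id ∧ M.card = n}

/-!
Enclose `H` in an interval and cut it into `n = τ(H)` cells. The `n - 1` interior cut points do not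
cover `H`, so some edge is uncut. Weight every edge by the product of its distances to the cut
points; the load of a cell, the total weight of the edges meeting it, is then continuous in the
cell lengths and vanishes on empty cells, so a dual form of the KKM theorem, obtained from Scarf's
lemma, yields a cut for which all cells carry the same load.

The edges of positive weight are exactly the uncut ones, and each meets at most `d` cells. The
weights scale to a fractional matching, of size at least `n / d`, of the hypergraph on the cells
that they induce. By Füredi's argument it contains a matching of at least `n / (d² - d + 1)` edges,
and uncut edges meeting disjoint sets of cells are disjoint.
-/

section Scarf

open Finset

section Counting

variable {α β : Type*} [DecidableEq α] [DecidableEq β]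

lemma image_erase_eq_image {s : Finset α} {f : α → β} {a b : α} (hb : b ∈ s) (hab : a ≠ b)
    (hf : f a = f b) : (s.erase a).image f = s.image f := by
  refine (image_subset_image (erase_subset a s)).antisymm fun y hy => ?_
  obtain ⟨x, hx, rfl⟩ := mem_image.1 hy
  obtain rfl | hxa := eq_or_ne x a
  · exact mem_image.2 ⟨b, mem_erase.2 ⟨hab.symm, hb⟩, hf.symm⟩
  · exact mem_image_of_mem f (mem_erase.2 ⟨hxa, hx⟩)

lemma injOn_erase_of_card_eq_card_image_add_one {s : Finset α} {f : α → β}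
    (hs : #s = #(s.image f) + 1) {x : α} (hx : x ∈ s)
    (h : (s.erase x).image f = s.image f) : Set.InjOn f (s.erase x) :=
  card_image_iff.1 <| by rw [h, card_erase_of_mem hx, hs, Nat.add_sub_cancel]

lemma card_filter_image_erase_eq_two {s : Finset α} {f : α → β} (hs : #s = #(s.image f) + 1) :
    #{x ∈ s | (s.erase x).image f = s.image f} = 2 := by
  obtain ⟨a, ha, b, hb, hab, hf⟩ :=
    exists_ne_map_eq_of_card_lt_of_maps_to (hs ▸ Nat.lt_succ_self _ : #(s.image f) < #s)
      (fun x hx => mem_image_of_mem f hx)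
  suffices {x ∈ s | (s.erase x).image f = s.image f} = {a, b} by rw [this, card_pair hab]
  ext x
  simp only [mem_filter, mem_insert, mem_singleton]
  constructor
  · rintro ⟨hx, h⟩
    by_contra! hne
    exact hab (injOn_erase_of_card_eq_card_image_add_one hs hx h
      (mem_erase.2 ⟨hne.1.symm, ha⟩) (mem_erase.2 ⟨hne.2.symm, hb⟩) hf)
  · rintro (rfl | rfl)
    · exact ⟨ha, image_erase_eq_image hb hab hf⟩
    · exact ⟨hb, image_erase_eq_image ha hab.symm hf.symm⟩

lemma even_card_filter_image_erase_eq_erase [Fintype β] {s : Finset α} {f : α → β} (b : β)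
    (hf : #s = Fintype.card β → s.image f ≠ univ) :
    Even #{x ∈ s | #(s.erase x) + 1 = Fintype.card β ∧ (s.erase x).image f = univ.erase b} := by
  by_cases hs : #s = Fintype.card β
  swap
  · rw [filter_eq_empty_iff.2 fun x hx h => hs (by rw [← h.1, card_erase_add_one hx]), card_empty]
    exact Even.zero
  rw [filter_congr (q := fun x => (s.erase x).image f = univ.erase b) fun x hx =>
    and_iff_right (by rw [card_erase_add_one hx, hs])]
  by_cases h : s.image f = univ.erase b
  · rw [← h, card_filter_image_erase_eq_two]
    · exact even_two
    · rw [h, card_erase_add_one (mem_univ b), hs, card_univ]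
  · rw [filter_eq_empty_iff.2, card_empty]
    · exact Even.zero
    · intro x hx hxb
      have himage : s.image f = insert (f x) (univ.erase b) := by
        rw [← hxb, ← image_insert, insert_erase hx]
      obtain hfx | hfx := eq_or_ne (f x) b
      · exact hf hs (by rw [himage, hfx, insert_erase (mem_univ b)])
      · exact h (by rw [himage, insert_eq_of_mem (mem_erase.2 ⟨hfx, mem_univ _⟩)])

lemma sum_card_filter_erase_eq_sum_card_filter_insert [Fintype α] (p q : Finset α → Prop)
    [DecidablePred p] [DecidablePred q] :
    ∑ S with q S, #{x ∈ S | p (S.erase x)} = ∑ R with p R, #{x | x ∉ R ∧ q (insert x R)} := by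
  rw [← card_sigma, ← card_sigma]
  refine card_nbij' (fun z => ⟨z.1.erase z.2, z.2⟩) (fun z => ⟨insert z.2 z.1, z.2⟩) ?_ ?_ ?_ ?_
  all_goals rintro ⟨S, x⟩ h
  all_goals simp only [coe_sigma, Set.mem_sigma_iff, mem_coe, mem_filter, mem_univ, true_and] at h ⊢
  · exact ⟨h.2.2, notMem_erase x S, by rw [insert_erase h.2.1]; exact h.1⟩
  · exact ⟨h.2.2, mem_insert_self x S, by rw [erase_insert h.2.1]; exact h.1⟩
  · rw [insert_erase h.2.1]
  · rw [erase_insert h.2.1]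

end Counting

variable {I V α : Type*} [LinearOrder α] {r : I → V → α} {d : I → V}

/-- `S` is dominant for the rankings `r i` of `V` if no point of `V` lies above a point of `S` in
every ranking. A dominant set with exactly as many points as there are rankings is an *ordinal
basis* in the terminology of Scarf's lemma. -/
def IsDominant (r : I → V → α) (S : Finset V) : Prop :=
  ∀ y, ∃ i, ∀ x ∈ S, r i y ≤ r i x

lemma IsDominant.mono {R S : Finset V} (hS : IsDominant r S) (hRS : R ⊆ S) : IsDominant r R :=
  fun y => (hS y).imp fun _ hi x hx => hi x (hRS hx)

/-- The points `d i` are slack for the rankings `r i` if `d i` is strictly last in ranking `i`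
and above all non-slack points in the other rankings. -/
structure IsSlack (r : I → V → α) (d : I → V) : Prop where
  lt_of_ne : ∀ i v, v ≠ d i → r i (d i) < r i v
  lt_of_notMem_range : ∀ i k v, k ≠ i → v ∉ Set.range d → r i v < r i (d k)

lemma IsSlack.le (hd : IsSlack r d) (i : I) (v : V) : r i (d i) ≤ r i v := by
  obtain rfl | hv := eq_or_ne v (d i)
  · exact le_rfl
  · exact (hd.lt_of_ne i v hv).le

lemma IsSlack.prodLex (hd : IsSlack r d) {β : Type*} [LinearOrder β] (e : V → β) :
    IsSlack (fun i v => toLex (r i v, e v)) d where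
  lt_of_ne i v hv := Prod.Lex.toLex_lt_toLex.2 (.inl (hd.lt_of_ne i v hv))
  lt_of_notMem_range i k v hk hv :=
    Prod.Lex.toLex_lt_toLex.2 (.inl (hd.lt_of_notMem_range i k v hk hv))

section RowMinima

variable {R : Finset V} {m : I → V}

lemma IsDominant.exists_rowMin_eq (hr : ∀ i, Function.Injective (r i)) (hR : IsDominant r R)
    (hmR : ∀ i, m i ∈ R) (hm : ∀ i, ∀ x ∈ R, r i (m i) ≤ r i x) {x : V} (hx : x ∈ R) :
    ∃ i, m i = x := by
  obtain ⟨i, hi⟩ := hR x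
  exact ⟨i, hr i ((hm i x hx).antisymm (hi _ (hmR i)))⟩

variable [DecidableEq V]

/-- The new point is the one highest in ranking `a` among those above `R` in all other rankings. -/
lemma IsDominant.existsUnique_insert [Finite V] (hr : ∀ i, Function.Injective (r i))
    (hR : IsDominant r R) (hmR : ∀ i, m i ∈ R) (hm : ∀ i, ∀ x ∈ R, r i (m i) ≤ r i x) (a : I)
    (ha : ∃ z, ∀ i ≠ a, r i (m i) < r i z) :
    ∃! x, (∀ i ≠ a, r i (m i) < r i x) ∧ IsDominant r (insert x R) := by
  have eq_of_le {y : V} (hy : ∀ i ≠ a, r i (m i) < r i y) {i : I} (hi : r i y ≤ r i (m i)) :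
      i = a := by
    by_contra hia
    exact (hy i hia).not_ge hi
  obtain ⟨x, hx, hmax⟩ :=
    Set.exists_max_image {y | ∀ i ≠ a, r i (m i) < r i y} (r a) (Set.toFinite _) ha
  refine ⟨x, ⟨hx, fun y => ?_⟩, ?_⟩
  · by_cases hy : ∀ i ≠ a, r i (m i) < r i y
    · obtain ⟨i, hi⟩ := hR y
      obtain rfl := eq_of_le hy (hi _ (hmR i))
      exact ⟨i, forall_mem_insert _ _ _ |>.2 ⟨hmax y hy, hi⟩⟩
    · push Not at hy
      obtain ⟨i, hia, hi⟩ := hy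
      exact ⟨i, forall_mem_insert _ _ _ |>.2
        ⟨hi.trans (hx i hia).le, fun u hu => hi.trans (hm i u hu)⟩⟩
  · rintro y ⟨hy, hyR⟩
    obtain ⟨i, hi⟩ := hyR x
    obtain rfl := eq_of_le hx (hi _ (mem_insert_of_mem (hmR i)))
    exact hr i ((hmax y hy).antisymm (hi y (mem_insert_self y R)))

/-- An added point `x` takes over the row minimum in exactly one ranking `a`, since the `card I`
points of `insert x R` are the row minima of the `card I` rankings. -/
lemma IsDominant.exists_image_erase_eq [Fintype I] [DecidableEq I]
    (hr : ∀ i, Function.Injective (r i)) (hcard : #R + 1 = Fintype.card I) (hmR : ∀ i, m i ∈ R)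
    (hm : ∀ i, ∀ x ∈ R, r i (m i) ≤ r i x) {x : V} (hx : x ∉ R)
    (hxR : IsDominant r (insert x R)) :
    ∃ a, (univ.erase a).image m = R ∧ ∀ i ≠ a, r i (m i) < r i x := by
  obtain ⟨a, ha⟩ := hxR x
  have exists_above : ∀ y ∈ R, ∃ i, m i = y ∧ r i (m i) < r i x := by
    intro y hy
    obtain ⟨i, hi⟩ := hxR y
    have hiy : m i = y := hr i ((hm i y hy).antisymm (hi _ (mem_insert_of_mem (hmR i))))
    subst hiy
    exact ⟨i, rfl, (hi x (mem_insert_self x R)).lt_of_ne fun h => hx (hr i h ▸ hy)⟩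
  have ne_of_above {i : I} (hi : r i (m i) < r i x) : i ≠ a := by
    rintro rfl
    exact (ha _ (mem_insert_of_mem (hmR i))).not_gt hi
  have himage : (univ.erase a).image m = R := by
    ext y
    simp only [mem_image, mem_erase, mem_univ, and_true]
    constructor
    · rintro ⟨i, -, rfl⟩
      exact hmR i
    · intro hy
      obtain ⟨i, hi, hix⟩ := exists_above y hy
      exact ⟨i, ne_of_above hix, hi⟩
  have hinj : Set.InjOn m (univ.erase a : Finset I) := card_image_iff.1 <| by
    rw [himage, card_erase_of_mem (mem_univ a), card_univ, ← hcard, Nat.add_sub_cancel]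
  refine ⟨a, himage, fun i hi => ?_⟩
  obtain ⟨k, hk, hkx⟩ := exists_above (m i) (hmR i)
  obtain rfl := hinj (mem_erase.2 ⟨ne_of_above hkx, mem_univ k⟩) (mem_erase.2 ⟨hi, mem_univ i⟩) hk
  exact hkx

lemma IsDominant.card_filter_insert_eq_two [Fintype I] [Fintype V]
    [DecidablePred (IsDominant r)] (hr : ∀ i, Function.Injective (r i)) (hR : IsDominant r R)
    (hcard : #R + 1 = Fintype.card I) (hmR : ∀ i, m i ∈ R)
    (hm : ∀ i, ∀ x ∈ R, r i (m i) ≤ r i x) (hz : ∀ a, ∃ z, ∀ i ≠ a, r i (m i) < r i z) :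
    #{x | x ∉ R ∧ IsDominant r (insert x R)} = 2 := by
  classical
  have himage : univ.image m = R := by
    ext x
    simp only [mem_image, mem_univ, true_and]
    exact ⟨fun ⟨i, hi⟩ => hi ▸ hmR i, hR.exists_rowMin_eq hr hmR hm⟩
  choose g hg huniq using fun a => hR.existsUnique_insert hr hmR hm a (hz a)
  rw [← card_filter_image_erase_eq_two (s := univ) (f := m) (by rw [himage, card_univ, hcard]),
    himage]
  symm
  refine card_bij (fun a _ => g a) ?_ ?_ ?_
  · intro a ha
    obtain ⟨-, ha⟩ := mem_filter.1 ha
    refine mem_filter.2 ⟨mem_univ _, fun hgR => ?_, (hg a).2⟩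
    rw [← ha] at hgR
    obtain ⟨i, hi, hig⟩ := mem_image.1 hgR
    exact ((hg a).1 i (ne_of_mem_erase hi)).ne (congrArg (r i) hig)
  · intro a _ b _ hab
    by_contra hne
    obtain ⟨i, hi⟩ := hR (g a)
    refine (hi _ (hmR i)).not_gt ?_
    obtain rfl | hia := eq_or_ne i a
    · exact hab ▸ (hg b).1 i hne
    · exact (hg a).1 i hia
  · intro x hx
    obtain ⟨-, hx, hxR⟩ := mem_filter.1 hx
    obtain ⟨a, ha, hax⟩ := IsDominant.exists_image_erase_eq hr hcard hmR hm hx hxR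
    exact ⟨a, mem_filter.2 ⟨mem_univ a, ha⟩, (huniq a x ⟨hax, hxR⟩).symm⟩

end RowMinima

lemma IsSlack.even_card_filter_insert [Fintype I] [Fintype V] [DecidableEq V]
    [DecidablePred (IsDominant r)] (hr : ∀ i, Function.Injective (r i)) (hd : IsSlack r d)
    {R : Finset V} (hcard : #R + 1 = Fintype.card I) {t : V} (htR : t ∈ R)
    (ht : t ∉ Set.range d) :
    Even #{x | x ∉ R ∧ IsDominant r (insert x R)} := by
  obtain h | ⟨x₀, hx₀⟩ := eq_empty_or_nonempty {x | x ∉ R ∧ IsDominant r (insert x R)}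
  · simp only [h, card_empty, Even.zero]
  have hR : IsDominant r R := (mem_filter.1 hx₀).2.2.mono (subset_insert x₀ R)
  choose m hmR hm using fun i => exists_min_image R (r i) ⟨t, htR⟩
  rw [hR.card_filter_insert_eq_two hr hcard hmR hm fun a =>
    ⟨d a, fun i hi => (hm i t htR).trans_lt (hd.lt_of_notMem_range i a t hi.symm ht)⟩]
  exact even_two

section

variable [Fintype I] [DecidableEq I] [DecidableEq V]

lemma IsSlack.isDominant_insert_iff (hd : IsSlack r d) {i₀ : I} {x t : V} (ht : t ∉ Set.range d)
    (hx : x ∉ (univ.erase i₀).image d) :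
    IsDominant r (insert x ((univ.erase i₀).image d)) ↔
      x ∉ Set.range d ∧ ∀ y ∉ Set.range d, r i₀ y ≤ r i₀ x := by
  have mem_of_ne {i : I} (hi : i ≠ i₀) : d i ∈ insert x ((univ.erase i₀).image d) :=
    mem_insert_of_mem (mem_image_of_mem d (mem_erase.2 ⟨hi, mem_univ i⟩))
  have not_le_of_notMem {v : V} (hv : v ∉ Set.range d) (i : I) : ¬ r i v ≤ r i (d i) :=
    (hd.lt_of_ne i v fun h => hv ⟨i, h.symm⟩).not_ge
  constructor
  · intro hdom
    have bound {y : V} (hy : y ∉ Set.range d) : r i₀ y ≤ r i₀ x := by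
      obtain ⟨i, hi⟩ := hdom y
      obtain rfl | hne := eq_or_ne i i₀
      · exact hi x (mem_insert_self _ _)
      · exact absurd (hi _ (mem_of_ne hne)) (not_le_of_notMem hy i)
    refine ⟨?_, fun y => bound⟩
    rintro ⟨k, rfl⟩
    obtain rfl | hk := eq_or_ne k i₀
    · exact not_le_of_notMem ht k (bound ht)
    · exact hx (mem_image_of_mem d (mem_erase.2 ⟨hk, mem_univ k⟩))
  · rintro ⟨-, hmax⟩ y
    by_cases hy : y ∈ Set.range d
    · obtain ⟨k, rfl⟩ := hy
      exact ⟨k, fun v _ => hd.le k v⟩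
    · refine ⟨i₀, forall_mem_insert _ _ _ |>.2 ⟨hmax y hy, forall_mem_image.2 fun k hk => ?_⟩⟩
      exact (hd.lt_of_notMem_range i₀ k y (ne_of_mem_erase hk) hy).le

lemma IsSlack.card_filter_insert_image_erase_eq_one [Fintype V] [DecidablePred (IsDominant r)]
    (hr : ∀ i, Function.Injective (r i)) (hd : IsSlack r d) {t : V} (ht : t ∉ Set.range d)
    (i₀ : I) :
    #{x | x ∉ (univ.erase i₀).image d ∧
      IsDominant r (insert x ((univ.erase i₀).image d))} = 1 := by
  obtain ⟨x, hx, hmax⟩ :=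
    Set.exists_max_image (Set.range d)ᶜ (r i₀) (Set.toFinite _) ⟨t, ht⟩
  have notMem_of {y : V} (hy : y ∉ Set.range d) : y ∉ (univ.erase i₀).image d := fun h =>
    hy ((mem_image.1 h).imp fun _ hk => hk.2)
  refine card_eq_one.2 ⟨x, ?_⟩
  ext y
  simp only [mem_filter, mem_univ, true_and, mem_singleton]
  constructor
  · rintro ⟨hyR, hdom⟩
    obtain ⟨hy, hymax⟩ := (hd.isDominant_insert_iff ht hyR).1 hdom
    exact hr i₀ ((hmax y hy).antisymm (hymax x hx))
  · rintro rfl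
    exact ⟨notMem_of hx, (hd.isDominant_insert_iff ht (notMem_of hx)).2 ⟨hx, hmax⟩⟩

end

lemma eq_image_of_image_eq [DecidableEq I] [DecidableEq V] {c : V → I}
    (hcd : Function.LeftInverse c d) {R : Finset V} (hR : ↑R ⊆ Set.range d) {J : Finset I}
    (hcR : R.image c = J) : R = J.image d := by
  subst hcR
  rw [image_image]
  refine image_id.symm.trans (image_congr fun v hv => ?_)
  obtain ⟨i, rfl⟩ := hR hv
  exact congrArg d (hcd i).symm

lemma IsSlack.exists_isDominant_image_eq_univ_of_injective [Fintype I] [DecidableEq I] [Finite V]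
    [Nonempty I] (hr : ∀ i, Function.Injective (r i)) (hd : IsSlack r d) {t : V}
    (ht : t ∉ Set.range d) {c : V → I} (hcd : Function.LeftInverse c d) :
    ∃ S, #S = Fintype.card I ∧ IsDominant r S ∧ S.image c = univ := by
  classical
  have := Fintype.ofFinite V
  obtain ⟨i₀⟩ := ‹Nonempty I›
  by_contra! hne
  let R₀ : Finset V := (univ.erase i₀).image d
  let p (R : Finset V) : Prop := #R + 1 = Fintype.card I ∧ R.image c = univ.erase i₀
  have hR₀ : p R₀ := by
    refine ⟨?_, ?_⟩
    · rw [card_image_of_injective _ hcd.injective, card_erase_add_one (mem_univ i₀), card_univ]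
    · rw [image_image, hcd.comp_eq_id, image_id]
  have heven_rooms : Even (∑ S with IsDominant r S, #{x ∈ S | p (S.erase x)}) :=
    even_sum _ fun S hS => even_card_filter_image_erase_eq_erase i₀ fun hcard =>
      hne S hcard (mem_filter.1 hS).2
  have heven_doors : Even (∑ R ∈ ({R | p R} : Finset _).erase R₀,
      #{x | x ∉ R ∧ IsDominant r (insert x R)}) :=
    even_sum _ fun R hR => by
      obtain ⟨hRR₀, hR⟩ := mem_erase.1 hR
      obtain ⟨-, hcard, hcR⟩ := mem_filter.1 hR
      obtain ⟨s, hsR, hs⟩ := Set.not_subset.1 (mt (eq_image_of_image_eq hcd · hcR) hRR₀)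
      exact hd.even_card_filter_insert hr hcard hsR hs
  rw [sum_card_filter_erase_eq_sum_card_filter_insert p (IsDominant r),
    ← add_sum_erase _ _ (mem_filter.2 ⟨mem_univ R₀, hR₀⟩),
    hd.card_filter_insert_image_erase_eq_one hr ht i₀] at heven_rooms
  exact Nat.not_even_one ((Nat.even_add.1 heven_rooms).2 heven_doors)

/-- Scarf's lemma. -/
theorem IsSlack.exists_isDominant_image_eq_univ [Fintype I] [DecidableEq I] [Finite V]
    [Nonempty I] (hd : IsSlack r d) {t : V} (ht : t ∉ Set.range d) {c : V → I}
    (hcd : Function.LeftInverse c d) :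
    ∃ S, #S = Fintype.card I ∧ IsDominant r S ∧ S.image c = univ := by
  obtain ⟨n, ⟨e⟩⟩ := Finite.exists_equiv_fin V
  obtain ⟨S, hcard, hS, hcS⟩ := (hd.prodLex e).exists_isDominant_image_eq_univ_of_injective
    (fun i v w h => e.injective (Prod.ext_iff.1 (toLex.injective h)).2) ht hcd
  refine ⟨S, hcard, fun y => (hS y).imp fun i hi x hx => ?_, hcS⟩
  exact Prod.Lex.monotone_fst _ _ (hi x hx)

/-- A form of Scarf's lemma without slack points: they take over the colours outside `C`, and
they weaken dominance to the rankings in `C`. -/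
theorem exists_subset_image_and_forall_exists_le [Finite I] [DecidableEq I] [Nonempty I]
    (f : I → V → α) (c : V → I) (s : Finset V) :
    ∃ σ ⊆ s, ∃ C ⊆ σ.image c, ∀ y ∈ s, ∃ i ∈ C, ∀ x ∈ σ, f i y ≤ f i x := by
  classical
  have := Fintype.ofFinite I
  obtain rfl | ⟨t, ht⟩ := s.eq_empty_or_nonempty
  · exact ⟨∅, Subset.rfl, ∅, empty_subset _, fun y hy => absurd hy (notMem_empty y)⟩
  let r (i : I) : s ⊕ I → WithBot (WithTop α) :=
    Sum.elim (fun v => ((f i v : WithTop α) : WithBot (WithTop α)))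
      fun k => if k = i then ⊥ else ((⊤ : WithTop α) : WithBot (WithTop α))
  have hslack : IsSlack r Sum.inr := by
    constructor
    · rintro i (v | k) hv
      · simp [r]
      · have hk : k ≠ i := fun h => hv (congrArg _ h)
        simp [r, hk]
    · rintro i k (v | l) hk hv
      · simpa [r, hk] using WithBot.coe_lt_coe.2 (WithTop.coe_lt_top _)
      · exact absurd ⟨l, rfl⟩ hv
  obtain ⟨S, -, hS, hcS⟩ := hslack.exists_isDominant_image_eq_univ (t := .inl ⟨t, ht⟩)
    (by rintro ⟨k, ⟨⟩⟩) (c := Sum.elim (fun v => c v) id) fun i => rfl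
  let σ : Finset V := S.toLeft.map (.subtype _)
  have mem_σ {x : V} : x ∈ σ ↔ ∃ hx : x ∈ s, .inl ⟨x, hx⟩ ∈ S := by
    simp [σ]
  refine ⟨σ, fun x hx => (mem_σ.1 hx).1, S.toRightᶜ, fun i hi => ?_, fun y hy => ?_⟩
  · have hiS : .inr i ∉ S := fun h => mem_compl.1 hi (mem_toRight.2 h)
    obtain ⟨x | k, hx, hxi⟩ := mem_image.1 (hcS ▸ mem_univ i)
    · exact mem_image.2 ⟨x, mem_σ.2 ⟨x.2, hx⟩, hxi⟩
    · exact absurd (hxi ▸ hx : .inr i ∈ S) hiS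
  · obtain ⟨i, hi⟩ := hS (.inl ⟨y, hy⟩)
    refine ⟨i, mem_compl.2 fun h => ?_, fun x hx => ?_⟩
    · have := hi _ (mem_toRight.1 h)
      simp [r] at this
    · obtain ⟨hxs, hxS⟩ := mem_σ.1 hx
      simpa [r] using hi _ hxS

end Scarf

section KKM

open Finset

variable {I : Type*} [Fintype I]

lemma lt_sum_add_one_of_forall_exists_le [Nonempty I] {N : ℕ} {l : I → ℕ} {C : Finset I}
    (h : ∀ y : I → ℕ, ∑ i, y i = N → ∃ i ∈ C, y i ≤ l i) : N < ∑ i ∈ C, (l i + 1) := by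
  classical
  by_contra! hle
  obtain ⟨i₀⟩ := ‹Nonempty I›
  let y (i : I) : ℕ := (if i ∈ C then l i + 1 else 0) +
    Pi.single (M := fun _ => ℕ) i₀ (N - ∑ i ∈ C, (l i + 1)) i
  have hy : ∑ i, y i = N := by
    rw [sum_add_distrib, sum_ite_mem, univ_inter, sum_pi_single', if_pos (mem_univ i₀),
      Nat.add_sub_cancel' hle]
  obtain ⟨i, hi, hil⟩ := h y hy
  have : l i + 1 ≤ y i := by simp only [y, if_pos hi, Nat.le_add_right]
  lia

/-- A dominant set of grid points lies in a small cube whose lower corner vanishes outside `C`. -/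
lemma exists_lower_corner [Nonempty I] {N : ℕ} {σ : Finset (I → ℕ)} {C : Finset I}
    (hne : σ.Nonempty) (hσ : ∀ x ∈ σ, ∑ i, x i = N)
    (hdom : ∀ y : I → ℕ, ∑ i, y i = N → ∃ i ∈ C, ∀ x ∈ σ, y i ≤ x i) :
    ∃ l : I → ℕ, (∀ i ∉ C, l i = 0) ∧
      ∀ x ∈ σ, ∀ i, l i ≤ x i ∧ x i ≤ l i + Fintype.card I := by
  classical
  choose m hm hmin using fun i => exists_min_image σ (fun x => x i) hne
  let l (i : I) : ℕ := if i ∈ C then m i i else 0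
  have le_of_mem {x : I → ℕ} (hx : x ∈ σ) (i : I) : l i ≤ x i := by
    by_cases hi : i ∈ C
    · simpa only [l, if_pos hi] using hmin i x hx
    · simp only [l, if_neg hi, Nat.zero_le]
  have hN : N < ∑ i, l i + Fintype.card I := calc
    N < ∑ i ∈ C, (l i + 1) := lt_sum_add_one_of_forall_exists_le fun y hy => by
      obtain ⟨i, hi, hiy⟩ := hdom y hy
      exact ⟨i, hi, by simpa only [l, if_pos hi] using hiy (m i) (hm i)⟩
    _ ≤ ∑ i, (l i + 1) := sum_le_univ_sum_of_nonneg fun i => Nat.zero_le _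
    _ = ∑ i, l i + Fintype.card I := by
      rw [sum_add_distrib, sum_const, card_univ, smul_eq_mul, mul_one]
  refine ⟨l, fun i hi => if_neg hi, fun x hx i => ⟨le_of_mem hx i, ?_⟩⟩
  have hsum : ∑ i, (x i - l i) + ∑ i, l i = N := by
    rw [← sum_add_distrib, ← hσ x hx]
    exact sum_congr rfl fun i _ => Nat.sub_add_cancel (le_of_mem hx i)
  have hi : x i - l i ≤ ∑ i, (x i - l i) :=
    single_le_sum_of_canonicallyOrdered (f := fun i => x i - l i) (mem_univ i)
  lia

lemma natCast_div_mem_stdSimplex {N : ℕ} (hN : 0 < N) {x : I → ℕ} (hx : ∑ i, x i = N) :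
    (fun i => (x i : ℝ) / N) ∈ stdSimplex ℝ I := by
  refine ⟨fun i => by positivity, ?_⟩
  rw [← sum_div, ← Nat.cast_sum, hx, div_self (by positivity)]

lemma dist_natCast_div_le {N k : ℕ} {x y : I → ℕ} (hxy : ∀ i, x i ≤ y i + k)
    (hyx : ∀ i, y i ≤ x i + k) :
    dist (fun i => (x i : ℝ) / N) (fun i => (y i : ℝ) / N) ≤ k / N := by
  refine (dist_pi_le_iff (by positivity)).2 fun i => ?_
  have hxyi : (x i : ℝ) ≤ y i + k := mod_cast hxy i
  have hyxi : (y i : ℝ) ≤ x i + k := mod_cast hyx i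
  rw [Real.dist_eq, ← sub_div, abs_div, Nat.abs_cast]
  gcongr
  rw [abs_sub_le_iff]
  constructor <;> linarith

lemma exists_clustered_colours [Nonempty I] (N : ℕ) (c : (I → ℕ) → I) :
    ∃ x : I → ℕ, ∑ i, x i = N ∧ ∀ i, ∃ y : I → ℕ, (∀ j, x j ≤ y j + Fintype.card I) ∧
      (∀ j, y j ≤ x j + Fintype.card I) ∧ (y i = 0 ∨ ∑ j, y j = N ∧ c y = i) := by
  classical
  obtain ⟨σ, hσs, C, hC, hdom⟩ :=
    exists_subset_image_and_forall_exists_le (fun i x => x i) c (piAntidiag (univ : Finset I) N)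
  have mem_grid {x : I → ℕ} : x ∈ piAntidiag univ N ↔ ∑ i, x i = N := by
    simp [mem_piAntidiag]
  have hσ : ∀ x ∈ σ, ∑ i, x i = N := fun x hx => mem_grid.1 (hσs hx)
  obtain ⟨i₀⟩ := ‹Nonempty I›
  have hne : σ.Nonempty := by
    obtain ⟨i, hi, -⟩ := hdom (Pi.single i₀ N) (mem_grid.2 (by simp))
    exact image_nonempty.1 ⟨i, hC hi⟩
  obtain ⟨l, hlC, hl⟩ := exists_lower_corner hne hσ fun y hy => hdom y (mem_grid.2 hy)
  obtain ⟨x, hx⟩ := hne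
  refine ⟨x, hσ x hx, fun i => ?_⟩
  by_cases hi : i ∈ C
  · obtain ⟨y, hy, hyi⟩ := mem_image.1 (hC hi)
    refine ⟨y, fun j => ?_, fun j => ?_, .inr ⟨hσ y hy, hyi⟩⟩
    · exact (hl x hx j).2.trans (Nat.add_le_add_right (hl y hy j).1 _)
    · exact (hl y hy j).2.trans (Nat.add_le_add_right (hl x hx j).1 _)
  · exact ⟨l, fun j => (hl x hx j).2, fun j => (hl x hx j).1.trans (Nat.le_add_right _ _),
      .inl (hlC i hi)⟩

/-- A dual form of the Knaster–Kuratowski–Mazurkiewicz theorem. -/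
theorem exists_mem_stdSimplex_forall_eq_zero_or_mem [Nonempty I] {B : I → Set (I → ℝ)}
    (hB : ∀ i, IsClosed (B i)) (hcov : stdSimplex ℝ I ⊆ ⋃ i, B i) :
    ∃ z ∈ stdSimplex ℝ I, ∀ i, z i = 0 ∨ z ∈ B i := by
  classical
  by_contra! hne
  obtain ⟨δ, hδ, hball⟩ := lebesgue_number_lemma_of_metric (isCompact_stdSimplex ℝ I)
    (c := fun i => {z : I → ℝ | z i ≠ 0} ∩ (B i)ᶜ)
    (fun i => (isOpen_ne_fun (continuous_apply i) continuous_const).inter (hB i).isOpen_compl)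
    (fun z hz => Set.mem_iUnion.2 (hne z hz))
  obtain ⟨N, hN⟩ := exists_nat_gt (Fintype.card I / δ)
  have hN₀ : (0 : ℝ) < N := (by positivity : (0 : ℝ) ≤ Fintype.card I / δ).trans_lt hN
  have hmesh : (Fintype.card I : ℝ) / N < δ := (div_lt_comm₀ hδ hN₀).1 hN
  have hgrid {x : I → ℕ} (hx : ∑ i, x i = N) := natCast_div_mem_stdSimplex (mod_cast hN₀) hx
  have hcol (x : I → ℕ) : ∃ i, ∑ j, x j = N → (fun j => (x j : ℝ) / N) ∈ B i := by
    by_cases hx : ∑ j, x j = N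
    · exact (Set.mem_iUnion.1 (hcov (hgrid hx))).imp fun _ h _ => h
    · exact ⟨Classical.arbitrary I, fun h => absurd h hx⟩
  choose c hc using hcol
  obtain ⟨x, hx, hnear⟩ := exists_clustered_colours N c
  obtain ⟨i, hi⟩ := hball _ (hgrid hx)
  obtain ⟨y, hxy, hyx, hy⟩ := hnear i
  obtain ⟨hyi, hyB⟩ :=
    hi (Metric.mem_ball.2 ((dist_natCast_div_le (N := N) hyx hxy).trans_lt hmesh))
  obtain h | ⟨hyN, rfl⟩ := hy
  · exact hyi (by simp only [h, Nat.cast_zero, zero_div])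
  · exact hyB (hc y hyN)

theorem exists_mem_stdSimplex_forall_eq [Nonempty I] {F : I → (I → ℝ) → ℝ}
    (hF : ∀ i, Continuous (F i))
    (hzero : ∀ x ∈ stdSimplex ℝ I, ∀ i, x i = 0 → ∀ k, F i x ≤ F k x) :
    ∃ z ∈ stdSimplex ℝ I, ∀ i k, F i z = F k z := by
  have hclosed (i : I) : IsClosed {x | ∀ k, F i x ≤ F k x} := by
    simp only [Set.ofPred_forall]
    exact isClosed_iInter fun k => isClosed_le (hF i) (hF k)
  obtain ⟨z, hz, hmin⟩ := exists_mem_stdSimplex_forall_eq_zero_or_mem hclosed fun x _ =>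
    Set.mem_iUnion.2 (Finite.exists_min fun i => F i x)
  have hle (i k : I) : F i z ≤ F k z := (hmin i).elim (fun h => hzero z hz i h k) fun h => h k
  exact ⟨z, hz, fun i k => (hle i k).antisymm (hle k i)⟩

end KKM

section ExtremePoints

open Filter Topology

variable {F : Type*} [AddCommGroup F] [Module ℝ F] {K : Set F}

lemma eq_zero_of_mem_extremePoints_of_eventually_add_smul_mem {x z : F}
    (hx : x ∈ K.extremePoints ℝ) (hz : ∀ᶠ s in 𝓝 (0 : ℝ), x + s • z ∈ K) : z = 0 := by
  have hneg : ∀ᶠ s in 𝓝 (0 : ℝ), x + -s • z ∈ K :=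
    (continuous_neg.tendsto' (0 : ℝ) 0 neg_zero).eventually hz
  obtain ⟨s, ⟨hp, hm⟩, hs⟩ := (((hz.and hneg).filter_mono nhdsWithin_le_nhds).and
    (self_mem_nhdsWithin : {(0 : ℝ)}ᶜ ∈ 𝓝[≠] 0)).exists
  have hmid : x ∈ openSegment ℝ (x + s • z) (x + -s • z) :=
    ⟨1 / 2, 1 / 2, by norm_num, by norm_num, by norm_num, by module⟩
  have hxs : x + s • z = x := (mem_extremePoints_iff_left.1 hx).2 _ hp _ hm hmid
  exact (smul_eq_zero.1 (add_eq_left.1 hxs)).resolve_left hs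

lemma exists_mem_extremePoints_forall_le [TopologicalSpace F] [T2Space F] [IsTopologicalAddGroup F]
    [ContinuousSMul ℝ F] [LocallyConvexSpace ℝ F] (hK : IsCompact K) (hne : K.Nonempty)
    (l : StrongDual ℝ F) : ∃ x ∈ K.extremePoints ℝ, ∀ y ∈ K, l y ≤ l x := by
  have hexp : IsExposed ℝ K (l.toExposed K) := ContinuousLinearMap.toExposed.isExposed
  obtain ⟨x₀, hx₀, hmax⟩ := hK.exists_isMaxOn hne l.continuous.continuousOn
  obtain ⟨x, hx⟩ := (hexp.isCompact hK).extremePoints_nonempty ⟨x₀, hx₀, fun _ hy => hmax hy⟩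
  exact ⟨x, hexp.isExtreme.extremePoints_subset_extremePoints hx, (extremePoints_subset hx).2⟩

end ExtremePoints

section FractionalMatchings

open Finset Filter Topology

variable {E V : Type*} [Fintype E] [DecidableEq V] {T : E → Finset V} {S : Finset E} {w : E → ℝ}

/-- Fractional matchings of the hypergraph with edges `T e` that give weight only to edges in
`S`. -/
def fractionalMatchings (T : E → Finset V) (S : Finset E) : Set (E → ℝ) :=
  {w | (∀ e, 0 ≤ w e) ∧ (∀ e ∉ S, w e = 0) ∧ ∀ v, ∑ e with v ∈ T e, w e ≤ 1}

lemma fractionalMatchings_subset_Icc (hT : ∀ e ∈ S, (T e).Nonempty) :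
    fractionalMatchings T S ⊆ Set.Icc 0 1 := by
  rintro w ⟨hw, hwS, hwT⟩
  refine ⟨hw, fun e => ?_⟩
  by_cases he : e ∈ S
  · obtain ⟨v, hv⟩ := hT e he
    exact (single_le_sum (fun e _ => hw e) (mem_filter.2 ⟨mem_univ e, hv⟩)).trans (hwT v)
  · exact (hwS e he).trans_le zero_le_one

lemma isCompact_fractionalMatchings (hT : ∀ e ∈ S, (T e).Nonempty) :
    IsCompact (fractionalMatchings T S) := by
  refine isCompact_Icc.of_isClosed_subset ?_ (fractionalMatchings_subset_Icc hT)
  simp only [fractionalMatchings, Set.ofPred_and, Set.ofPred_forall]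
  refine .inter ?_ (.inter ?_ ?_)
  · exact isClosed_iInter fun e => isClosed_le continuous_const (continuous_apply e)
  · exact isClosed_biInter fun e _ => isClosed_eq (continuous_apply e) continuous_const
  · exact isClosed_iInter fun v => isClosed_le (by fun_prop) continuous_const

lemma ite_mem_fractionalMatchings (hw : w ∈ fractionalMatchings T S) (p : E → Prop)
    [DecidablePred p] :
    (fun e => if p e then w e else 0) ∈ fractionalMatchings T {e ∈ S | p e} := by
  obtain ⟨hw, hwS, hwT⟩ := hw
  refine ⟨fun e => ?_, fun e he => ?_, fun v => ?_⟩
  · exact ite_nonneg (hw e) le_rfl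
  · exact ite_eq_right_iff.2 fun hp => hwS e fun heS => he (mem_filter.2 ⟨heS, hp⟩)
  · refine (sum_le_sum fun e _ => ?_).trans (hwT v)
    split_ifs
    exacts [le_rfl, hw e]

lemma exists_ne_zero_forall_sum_eq_zero_of_card_lt (T : E → Finset V) {A : Finset E}
    {B : Finset V} (h : #B < #A) :
    ∃ z : E → ℝ, z ≠ 0 ∧ (∀ e ∉ A, z e = 0) ∧ ∀ v ∈ B, ∑ e with v ∈ T e, z e = 0 := by
  classical
  let u (e : E) (v : B) : ℝ := if ↑v ∈ T e then 1 else 0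
  have hu : ¬ LinearIndepOn ℝ u (A : Set E) := fun hu => h.not_ge <| by
    simpa using LinearIndependent.fintype_card_le_finrank hu
  obtain ⟨g, hg, e, he, hge⟩ := not_linearIndepOn_finset_iff.1 hu
  refine ⟨fun e => if e ∈ A then g e else 0, fun h => hge ?_, fun e he => if_neg he,
    fun v hv => ?_⟩
  · simpa only [if_pos he, Pi.zero_apply] using congrFun h e
  · have hgv := congrFun hg ⟨v, hv⟩
    simp only [u, Finset.sum_apply, Pi.smul_apply, smul_eq_mul, mul_ite, mul_one, mul_zero,
      Pi.zero_apply] at hgv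
    rw [sum_ite_mem, filter_inter, univ_inter, sum_filter, hgv]

lemma eventually_add_smul_mem_fractionalMatchings [Finite V] (hw : w ∈ fractionalMatchings T S)
    {z : E → ℝ} (hz : ∀ e, w e = 0 → z e = 0)
    (hzT : ∀ v, ∑ e with v ∈ T e, w e = 1 → ∑ e with v ∈ T e, z e = 0) :
    ∀ᶠ s in 𝓝 (0 : ℝ), w + s • z ∈ fractionalMatchings T S := by
  obtain ⟨hw, hwS, hwT⟩ := hw
  have hnonneg : ∀ᶠ s in 𝓝 (0 : ℝ), ∀ e, 0 ≤ w e + s * z e := by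
    refine eventually_all.2 fun e => ?_
    obtain he | he := (hw e).eq_or_lt
    · simp [hz e he.symm, ← he]
    · have hcont : Continuous fun s : ℝ => w e + s * z e := by fun_prop
      exact (hcont.continuousAt.eventually_const_lt (by simpa)).mono fun _ => le_of_lt
  have hle : ∀ᶠ s in 𝓝 (0 : ℝ), ∀ v, ∑ e with v ∈ T e, (w e + s * z e) ≤ 1 := by
    refine eventually_all.2 fun v => ?_
    simp only [sum_add_distrib, ← mul_sum]
    obtain hv | hv := (hwT v).eq_or_lt
    · simp [hzT v hv, hv]
    · have hcont : Continuous fun s : ℝ => ∑ e with v ∈ T e, w e + s * ∑ e with v ∈ T e, z e := by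
        fun_prop
      exact (hcont.continuousAt.eventually_lt_const (by simpa)).mono fun _ => le_of_lt
  filter_upwards [hnonneg, hle] with s hs hsT
  exact ⟨hs, fun e he => by simp [hwS e he, hz e (hwS e he)], hsT⟩

lemma card_support_le_card_tight [Fintype V] (hw : w ∈ (fractionalMatchings T S).extremePoints ℝ) :
    #{e | w e ≠ 0} ≤ #{v | ∑ e with v ∈ T e, w e = 1} := by
  by_contra! hlt
  obtain ⟨z, hz, hzw, hzT⟩ := exists_ne_zero_forall_sum_eq_zero_of_card_lt T hlt
  refine hz (eq_zero_of_mem_extremePoints_of_eventually_add_smul_mem hw ?_)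
  refine eventually_add_smul_mem_fractionalMatchings (extremePoints_subset hw) (fun e he => ?_)
    fun v hv => ?_
  · exact hzw e (by simpa using he)
  · exact hzT v (by simpa using hv)

lemma sum_sum_filter_mem_eq_sum_card_inter_mul (T : E → Finset V) (A : Finset V) (w : E → ℝ) :
    ∑ v ∈ A, ∑ e with v ∈ T e, w e = ∑ e, #(A ∩ T e) * w e := by
  rw [sum_comm' (t' := univ) (s' := fun e => A ∩ T e) (by simp)]
  simp only [sum_const, nsmul_eq_mul]

/-- Double counting over the tight vertices, which are at least as many as the edges carrying
weight. -/
lemma exists_one_le_mul_card [Finite V] (hw : w ∈ (fractionalMatchings T S).extremePoints ℝ)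
    (hne : w ≠ 0) : ∃ e, w e ≠ 0 ∧ 1 ≤ w e * #(T e) := by
  have := Fintype.ofFinite V
  have hwK := extremePoints_subset hw
  obtain ⟨e₀, he₀⟩ := Function.ne_iff.1 hne
  let B : Finset V := {v | ∑ e with v ∈ T e, w e = 1}
  have hsum : ∑ e with w e ≠ 0, (1 : ℝ) ≤ ∑ e with w e ≠ 0, w e * #(T e) := calc
    ∑ e with w e ≠ 0, (1 : ℝ) = #{e | w e ≠ 0} := by simp
    _ ≤ #B := mod_cast card_support_le_card_tight hw
    _ = ∑ v ∈ B, ∑ e with v ∈ T e, w e := by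
      rw [sum_congr rfl fun v hv => (mem_filter.1 hv).2, sum_const, nsmul_one]
    _ = ∑ e, #(B ∩ T e) * w e := sum_sum_filter_mem_eq_sum_card_inter_mul T B w
    _ ≤ ∑ e, w e * #(T e) := sum_le_sum fun e _ => by
      rw [mul_comm]
      gcongr
      exacts [hwK.1 e, inter_subset_right]
    _ = ∑ e with w e ≠ 0, w e * #(T e) := by
      rw [sum_filter_of_ne]
      exact fun e _ => left_ne_zero_of_mul
  obtain ⟨e, he, hle⟩ := exists_le_of_sum_le ⟨e₀, mem_filter.2 ⟨mem_univ _, he₀⟩⟩ hsum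
  exact ⟨e, (mem_filter.1 he).2, hle⟩

lemma sum_filter_not_disjoint_le (hw : w ∈ fractionalMatchings T S) {e : E}
    (he : (T e).Nonempty) :
    ∑ e' with ¬ Disjoint (T e) (T e'), w e' ≤ #(T e) - (#(T e) - 1) * w e := by
  classical
  have hterm (e' : E) : (if ¬ Disjoint (T e) (T e') then w e' else 0) +
      (if e' = e then (#(T e) - 1) * w e else 0) ≤ #(T e ∩ T e') * w e' := by
    obtain rfl | hne := eq_or_ne e' e
    · rw [if_pos (by rwa [disjoint_self_iff_empty, ← ne_eq, ← nonempty_iff_ne_empty]), if_pos rfl,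
        inter_self]
      linarith
    · rw [if_neg hne, add_zero]
      split_ifs with hdisj
      · exact mul_nonneg (Nat.cast_nonneg _) (hw.1 e')
      · have hcard : (1 : ℝ) ≤ #(T e ∩ T e') :=
          mod_cast card_pos.2 (not_disjoint_iff_nonempty_inter.1 hdisj)
        exact le_mul_of_one_le_left (hw.1 e') hcard
  have hsum : ∑ e' with ¬ Disjoint (T e) (T e'), w e' + (#(T e) - 1) * w e ≤ #(T e) := calc
    _ ≤ ∑ e', #(T e ∩ T e') * w e' := by
      simpa [sum_add_distrib, sum_filter] using sum_le_sum fun e' (_ : e' ∈ univ) => hterm e'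
    _ = ∑ v ∈ T e, ∑ e' with v ∈ T e', w e' :=
      (sum_sum_filter_mem_eq_sum_card_inter_mul T (T e) w).symm
    _ ≤ #(T e) := by simpa using sum_le_card_nsmul (T e) _ 1 fun v _ => hw.2.2 v
  linarith

lemma sub_mul_le_sub_one_add_one_div {k d : ℕ} {w : ℝ} (hk : 1 ≤ k) (hkd : k ≤ d)
    (hw : 1 ≤ w * k) : (k : ℝ) - (k - 1) * w ≤ d - 1 + 1 / d := by
  have hk₁ : (1 : ℝ) ≤ k := mod_cast hk
  have hkd₁ : (k : ℝ) ≤ d := mod_cast hkd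
  have hk₀ : (0 : ℝ) < k := by linarith
  have hd₀ : (0 : ℝ) < d := by linarith
  calc (k : ℝ) - (k - 1) * w ≤ k - (k - 1) * (1 / k) := by
        have := (div_le_iff₀ hk₀).2 hw
        gcongr
    _ = k - 1 + 1 / k := by
        field_simp
        ring
    _ = d - 1 + 1 / d - (d - k) * (d * k - 1) / (d * k) := by
        field_simp
        ring
    _ ≤ d - 1 + 1 / d := sub_le_self _ <| div_nonneg
        (mul_nonneg (by linarith) (by nlinarith)) (by positivity)

/-- A weak form of Füredi's theorem. Greedily pick an edge of weight at least `1 / #(T e)` in an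
extremal fractional matching and discard the edges meeting it. -/
theorem exists_pairwiseDisjoint_sum_le [Finite V] {d : ℕ} (S : Finset E)
    (hT : ∀ e ∈ S, (T e).Nonempty) (hd : ∀ e ∈ S, #(T e) ≤ d)
    (hw : w ∈ fractionalMatchings T S) :
    ∃ M ⊆ S, (M : Set E).PairwiseDisjoint T ∧ ∑ e, w e ≤ (d - 1 + 1 / d) * #M := by
  classical
  have := Fintype.ofFinite V
  induction S using Finset.strongInduction generalizing w with | H S ih
  let l : StrongDual ℝ (E → ℝ) := ∑ e, ContinuousLinearMap.proj e
  obtain ⟨u, hu, hmax⟩ := exists_mem_extremePoints_forall_le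
    (isCompact_fractionalMatchings hT) ⟨w, hw⟩ l
  have hwu : ∑ e, w e ≤ ∑ e, u e := by simpa [l] using hmax w hw
  have huK := extremePoints_subset hu
  by_cases hu₀ : u = 0
  · exact ⟨∅, empty_subset S, by simp, by simpa [hu₀] using hwu⟩
  obtain ⟨e, hue, he⟩ := exists_one_le_mul_card hu hu₀
  have heS : e ∈ S := by
    by_contra h
    exact hue (huK.2.1 e h)
  have hself : ¬ Disjoint (T e) (T e) := fun h =>
    (hT e heS).ne_empty ((disjoint_self_iff_empty _).1 h)
  have hlt : {f ∈ S | Disjoint (T e) (T f)} ⊂ S := filter_ssubset.2 ⟨e, heS, hself⟩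
  obtain ⟨M, hMS, hM, hsum⟩ := ih _ hlt (fun f hf => hT f (mem_filter.1 hf).1)
    (fun f hf => hd f (mem_filter.1 hf).1) (ite_mem_fractionalMatchings huK _)
  have heM : e ∉ M := fun h => hself (mem_filter.1 (hMS h)).2
  refine ⟨insert e M, insert_subset heS (hMS.trans hlt.subset), ?_, ?_⟩
  · rw [coe_insert]
    exact hM.insert fun f hf _ => (mem_filter.1 (hMS hf)).2
  · calc ∑ e, w e ≤ ∑ e, u e := hwu
      _ = ∑ f with ¬ Disjoint (T e) (T f), u f + ∑ f, if Disjoint (T e) (T f) then u f else 0 := by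
        rw [← sum_filter, add_comm, sum_filter_add_sum_filter_not]
      _ ≤ (d - 1 + 1 / d) + (d - 1 + 1 / d) * #M := by
        gcongr
        exact (sum_filter_not_disjoint_le huK (hT e heS)).trans
          (sub_mul_le_sub_one_add_one_div (card_pos.2 (hT e heS)) (hd e heS) he)
      _ = (d - 1 + 1 / d) * #(insert e M) := by
        rw [card_insert_of_notMem heM]
        push_cast
        ring

lemma card_mul_le_mul_sum_of_forall_sum_eq [Fintype V] {f : E → ℝ} {c : ℝ} {d : ℕ}
    (hf : ∀ e, 0 ≤ f e) (hd : ∀ e, 0 < f e → #(T e) ≤ d)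
    (hbal : ∀ v, ∑ e with v ∈ T e, f e = c) : Fintype.card V * c ≤ d * ∑ e, f e := calc
  Fintype.card V * c = ∑ v, ∑ e with v ∈ T e, f e := by
    rw [sum_congr rfl fun v _ => hbal v, sum_const, card_univ, nsmul_eq_mul]
  _ = ∑ e, #(T e) * f e := by
    simpa only [univ_inter] using sum_sum_filter_mem_eq_sum_card_inter_mul T univ f
  _ ≤ d * ∑ e, f e := by
    rw [mul_sum]
    refine sum_le_sum fun e _ => ?_
    obtain he | he := (hf e).eq_or_lt
    · rw [← he, mul_zero, mul_zero]
    · have := hd e he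
      gcongr

lemma div_mem_fractionalMatchings {f : E → ℝ} {c : ℝ} (hf : ∀ e, 0 ≤ f e) (hc : 0 < c)
    (hbal : ∀ v, ∑ e with v ∈ T e, f e = c) :
    (fun e => f e / c) ∈ fractionalMatchings T {e | 0 < f e} := by
  refine ⟨fun e => div_nonneg (hf e) hc.le, fun e he => ?_, fun v => ?_⟩
  · have hfe : f e = 0 := le_antisymm (by simpa using he) (hf e)
    simp only [hfe, zero_div]
  · rw [← sum_div, hbal v, div_self hc.ne']

/-- Weights that put the same load on every vertex are, up to scaling, a fractional matching in
which every vertex is tight, so its size is at least `card V / d`. -/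
theorem exists_pairwiseDisjoint_card_le_of_forall_sum_eq [Fintype V] {f : E → ℝ} {d : ℕ}
    (hf : ∀ e, 0 ≤ f e) (hT : ∀ e, 0 < f e → (T e).Nonempty) (hd : ∀ e, 0 < f e → #(T e) ≤ d)
    (hbal : ∀ u v, ∑ e with u ∈ T e, f e = ∑ e with v ∈ T e, f e) (hpos : ∃ e, 0 < f e) :
    ∃ M : Finset E, (∀ e ∈ M, 0 < f e) ∧ (M : Set E).PairwiseDisjoint T ∧
      Fintype.card V ≤ (d ^ 2 - d + 1) * #M := by
  obtain ⟨e₀, he₀⟩ := hpos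
  obtain ⟨v₀, hv₀⟩ := hT e₀ he₀
  have hd₀ : 0 < d := (card_pos.2 ⟨v₀, hv₀⟩).trans_le (hd e₀ he₀)
  let c : ℝ := ∑ e with v₀ ∈ T e, f e
  have hc : 0 < c := he₀.trans_le <|
    single_le_sum (fun e _ => hf e) (mem_filter.2 ⟨mem_univ e₀, hv₀⟩)
  obtain ⟨M, hM, hdisj, hsum⟩ := exists_pairwiseDisjoint_sum_le {e | 0 < f e}
    (fun e he => hT e (mem_filter.1 he).2) (fun e he => hd e (mem_filter.1 he).2)
    (div_mem_fractionalMatchings hf hc fun v => hbal v v₀)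
  refine ⟨M, fun e he => (mem_filter.1 (hM he)).2, hdisj, ?_⟩
  rw [← Nat.cast_le (α := ℝ), Nat.cast_mul, Nat.cast_succ,
    Nat.cast_sub (Nat.le_self_pow two_ne_zero d), Nat.cast_pow]
  calc (Fintype.card V : ℝ) ≤ d * ∑ e, f e / c := by
        rw [← sum_div, mul_div_assoc', le_div_iff₀ hc]
        exact card_mul_le_mul_sum_of_forall_sum_eq hf hd fun v => hbal v v₀
    _ ≤ d * ((d - 1 + 1 / d) * #M) := by gcongr
    _ = (d ^ 2 - d + 1) * #M := by field_simp

end FractionalMatchings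

section CutPoints

open Finset

variable {n : ℕ} {A B : ℝ} {x : Fin n → ℝ}

/-- The `j`-th endpoint when `[A, B]` is cut into `n` consecutive cells of relative lengths
`x 0, …, x (n - 1)`. -/
noncomputable def cutPoint (A B : ℝ) (x : Fin n → ℝ) (j : ℕ) : ℝ :=
  A + (B - A) * ∑ t : Fin n with t.val < j, x t

lemma cutPoint_zero (A B : ℝ) (x : Fin n → ℝ) : cutPoint A B x 0 = A := by
  simp [cutPoint]

lemma cutPoint_last (A B : ℝ) (hx : ∑ i, x i = 1) : cutPoint A B x n = B := by
  simp [cutPoint, hx]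

lemma cutPoint_succ (A B : ℝ) (x : Fin n → ℝ) (i : Fin n) :
    cutPoint A B x (i + 1) = cutPoint A B x i + (B - A) * x i := by
  have hfilter : filter (fun t : Fin n => t.val < i.val + 1) univ =
      insert i (filter (fun t : Fin n => t.val < i.val) univ) := by
    ext t
    simp only [mem_filter, mem_univ, true_and, mem_insert, Fin.ext_iff]
    lia
  simp only [cutPoint]
  rw [hfilter, sum_insert (by simp)]
  ring

lemma cutPoint_monotone (hAB : A ≤ B) (hx : ∀ i, 0 ≤ x i) : Monotone (cutPoint A B x) := by
  intro j k hjk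
  have := sub_nonneg.2 hAB
  unfold cutPoint
  gcongr
  exact fun t _ _ => hx t

lemma continuous_cutPoint (A B : ℝ) (j : ℕ) :
    Continuous fun x : Fin n → ℝ => cutPoint A B x j := by
  unfold cutPoint
  fun_prop

end CutPoints

section Cells

open Finset

variable {q : ℕ → ℝ} {n : ℕ} {s t : Set ℝ}

open Classical in
/-- The cells, among the open intervals between consecutive cut points `q 0, …, q n`, that meet
`s`. -/
noncomputable def metCells (q : ℕ → ℝ) (n : ℕ) (s : Set ℝ) : Finset (Fin n) :=
  {i | (s ∩ Set.Ioo (q i) (q (i + 1))).Nonempty}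

lemma mem_metCells {i : Fin n} :
    i ∈ metCells q n s ↔ (s ∩ Set.Ioo (q i) (q (i + 1))).Nonempty := by
  simp [metCells]

lemma exists_mem_Ioo_of_forall_ne (hq : Monotone q) {y : ℝ} (hy : y ∈ Set.Ioo (q 0) (q n))
    (hne : ∀ j ≤ n, q j ≠ y) : ∃ i : Fin n, y ∈ Set.Ioo (q i) (q (i + 1)) := by
  have hmem : y ∈ ⋃ i ∈ Set.Ico 0 n, Set.Ioc (q i) (q (Order.succ i)) := by
    rw [hq.biUnion_Ico_Ioc_map_succ]
    exact Set.Ioo_subset_Ioc_self hy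
  simp only [Set.mem_iUnion] at hmem
  obtain ⟨i, ⟨-, hi⟩, hiy, hyi⟩ := hmem
  exact ⟨⟨i, hi⟩, hiy, hyi.lt_of_ne (hne (i + 1) hi).symm⟩

lemma metCells_nonempty (hq : Monotone q) (hs : s.Nonempty) (hsub : s ⊆ Set.Ioo (q 0) (q n))
    (hcut : ∀ j ≤ n, q j ∉ s) : (metCells q n s).Nonempty := by
  obtain ⟨y, hy⟩ := hs
  obtain ⟨i, hi⟩ := exists_mem_Ioo_of_forall_ne hq (hsub hy) fun j hj h => hcut j hj (h ▸ hy)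
  exact ⟨i, mem_metCells.2 ⟨y, hy, hi⟩⟩

lemma disjoint_of_disjoint_metCells (hq : Monotone q) (hsub : s ⊆ Set.Ioo (q 0) (q n))
    (hcut : ∀ j ≤ n, q j ∉ s) (hst : Disjoint (metCells q n s) (metCells q n t)) :
    Disjoint s t := by
  refine Set.disjoint_left.2 fun y hys hyt => ?_
  obtain ⟨i, hi⟩ := exists_mem_Ioo_of_forall_ne hq (hsub hys) fun j hj h => hcut j hj (h ▸ hys)
  exact disjoint_left.1 hst (mem_metCells.2 ⟨y, hys, hi⟩) (mem_metCells.2 ⟨y, hyt, hi⟩)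

/-- Distinct cells are separated by a cut point, so an uncut component meets at most one. -/
lemma card_metCells_iUnion_le {ι : Type*} [Fintype ι] {κ : ι → Set ℝ} (hq : Monotone q)
    (hκ : ∀ k, (κ k).OrdConnected) (hcut : ∀ j ≤ n, q j ∉ ⋃ k, κ k) :
    #(metCells q n (⋃ k, κ k)) ≤ Fintype.card ι := by
  have hpoint (i : metCells q n (⋃ k, κ k)) :
      ∃ k, ∃ y ∈ κ k, y ∈ Set.Ioo (q i) (q (i + 1)) := by
    obtain ⟨y, hy, hyi⟩ := mem_metCells.1 i.2
    obtain ⟨k, hk⟩ := Set.mem_iUnion.1 hy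
    exact ⟨k, y, hk, hyi⟩
  choose k y hyk hyi using hpoint
  have not_lt_of_eq {i j : metCells q n (⋃ k, κ k)} (hij : k i = k j) : ¬ i < j := by
    intro hlt
    refine hcut (i + 1) i.1.2 (Set.mem_iUnion.2 ⟨k i, (hκ _).out (hyk i) (hij ▸ hyk j) ⟨?_, ?_⟩⟩)
    · exact (hyi i).2.le
    · exact (hq (Nat.succ_le_of_lt hlt)).trans (hyi j).1.le
  rw [← Fintype.card_coe]
  refine Fintype.card_le_of_injective k fun i j hij => ?_
  exact le_antisymm (not_lt.1 (not_lt_of_eq hij.symm)) (not_lt.1 (not_lt_of_eq hij))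

lemma IsDInterval.card_metCells_le {d : ℕ} (hs : IsDInterval d s) (hq : Monotone q)
    (hcut : ∀ j ≤ n, q j ∉ s) : #(metCells q n s) ≤ d := by
  obtain ⟨m, a, b, hm, -, -, rfl⟩ := hs
  have := card_metCells_iUnion_le hq (fun _ => Set.ordConnected_Icc) hcut
  exact this.trans ((Fintype.card_fin m).trans_le hm)

lemma IsDInterval.isCompact {d : ℕ} (hs : IsDInterval d s) : IsCompact s := by
  obtain ⟨m, a, b, -, -, -, rfl⟩ := hs
  exact isCompact_iUnion fun _ => isCompact_Icc

/-- A nonnegative measure of how far the cut points `q 0, …, q n` stay away from `s`; it depends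
continuously on the cut points and vanishes as soon as one of them hits `s`. -/
noncomputable def avoidance (q : ℕ → ℝ) (n : ℕ) (s : Set ℝ) : ℝ :=
  ∏ j ∈ range (n + 1), Metric.infDist (q j) s

lemma avoidance_nonneg (q : ℕ → ℝ) (n : ℕ) (s : Set ℝ) : 0 ≤ avoidance q n s :=
  prod_nonneg fun _ _ => Metric.infDist_nonneg

lemma avoidance_eq_zero {j : ℕ} (hj : j ≤ n) (h : q j ∈ s) : avoidance q n s = 0 :=
  prod_eq_zero (mem_range.2 (Nat.lt_succ_of_le hj)) (Metric.infDist_zero_of_mem h)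

lemma avoidance_pos_iff (hs : IsClosed s) (hne : s.Nonempty) :
    0 < avoidance q n s ↔ ∀ j ≤ n, q j ∉ s := by
  refine ⟨fun h j hj hjs => h.ne' (avoidance_eq_zero hj hjs), fun h => prod_pos fun j hj => ?_⟩
  exact (hs.notMem_iff_infDist_pos hne).1 (h j (Nat.le_of_lt_succ (mem_range.1 hj)))

lemma continuous_avoidance {X : Type*} [TopologicalSpace X] {q : X → ℕ → ℝ}
    (hq : ∀ j, Continuous fun x => q x j) (n : ℕ) (s : Set ℝ) :
    Continuous fun x => avoidance (q x) n s :=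
  continuous_finsetProd _ fun j _ => (Metric.continuous_infDist_pt s).comp (hq j)

end Cells

section MovingIntervals

variable {X : Type*} [TopologicalSpace X] {a b : X → ℝ} {s : Set ℝ}

lemma isOpen_setOf_inter_Ioo_nonempty (ha : Continuous a) (hb : Continuous b) :
    IsOpen {x | (s ∩ Set.Ioo (a x) (b x)).Nonempty} := by
  have hunion : {x | (s ∩ Set.Ioo (a x) (b x)).Nonempty} = ⋃ y ∈ s, {x | a x < y ∧ y < b x} := by
    ext x
    simp [Set.Nonempty, and_left_comm]
  rw [hunion]
  exact isOpen_biUnion fun y _ =>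
    (isOpen_lt ha continuous_const).inter (isOpen_lt continuous_const hb)

lemma isClosed_setOf_inter_Icc_nonempty (ha : Continuous a) (hb : Continuous b)
    (hs : IsCompact s) : IsClosed {x | (s ∩ Set.Icc (a x) (b x)).Nonempty} := by
  have := isCompact_iff_compactSpace.1 hs
  have himage : {x | (s ∩ Set.Icc (a x) (b x)).Nonempty} =
      Prod.fst '' {p : X × s | a p.1 ≤ p.2 ∧ p.2 ≤ b p.1} := by
    ext x
    simp [Set.Nonempty, and_left_comm]
  have hclosed : IsClosed {p : X × s | a p.1 ≤ p.2 ∧ p.2 ≤ b p.1} :=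
    (isClosed_le (ha.comp continuous_fst) (by fun_prop)).inter
      (isClosed_le (by fun_prop) (hb.comp continuous_fst))
  exact himage ▸ isClosedMap_fst_of_compactSpace _ hclosed

open Classical in
/-- The condition can only change its truth value when an endpoint passes through `s`. -/
lemma continuous_ite_inter_Ioo_nonempty (ha : Continuous a) (hb : Continuous b)
    (hs : IsCompact s) {g : X → ℝ} (hg : Continuous g)
    (hzero : ∀ x, a x ∈ s ∨ b x ∈ s → g x = 0) :
    Continuous fun x => if (s ∩ Set.Ioo (a x) (b x)).Nonempty then g x else 0 := by
  refine hg.if (fun x hx => hzero x ?_) continuous_const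
  rw [(isOpen_setOf_inter_Ioo_nonempty ha hb).frontier_eq] at hx
  have hclosure : closure {x | (s ∩ Set.Ioo (a x) (b x)).Nonempty} ⊆
      {x | (s ∩ Set.Icc (a x) (b x)).Nonempty} :=
    closure_minimal (fun x => .mono (Set.inter_subset_inter_right s Set.Ioo_subset_Icc_self))
      (isClosed_setOf_inter_Icc_nonempty ha hb hs)
  obtain ⟨y, hys, hay, hyb⟩ := hclosure hx.1
  obtain rfl | hay := hay.eq_or_lt
  · exact .inl hys
  obtain rfl | hyb := hyb.eq_or_lt
  · exact .inr hys
  · exact absurd ⟨y, hys, hay, hyb⟩ hx.2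

end MovingIntervals

section DIntervals

open Finset

variable {E : Type*} {s : E → Set ℝ}

lemma exists_forall_sum_avoidance_eq [Fintype E] {n : ℕ} [NeZero n] {A B : ℝ} (hAB : A ≤ B)
    (hs : ∀ e, IsCompact (s e)) :
    ∃ q : ℕ → ℝ, Monotone q ∧ q 0 = A ∧ q n = B ∧ ∀ i k : Fin n,
      ∑ e with i ∈ metCells q n (s e), avoidance q n (s e) =
        ∑ e with k ∈ metCells q n (s e), avoidance q n (s e) := by
  let load (i : Fin n) (x : Fin n → ℝ) : ℝ :=
    ∑ e with i ∈ metCells (cutPoint A B x) n (s e), avoidance (cutPoint A B x) n (s e)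
  have hload (i : Fin n) : Continuous (load i) := by
    simp only [load, sum_filter, mem_metCells]
    refine continuous_finsetSum _ fun e _ => ?_
    have hhit (x : Fin n → ℝ)
        (hx : cutPoint A B x i ∈ s e ∨ cutPoint A B x (i + 1) ∈ s e) :
        avoidance (cutPoint A B x) n (s e) = 0 :=
      hx.elim (avoidance_eq_zero i.2.le) (avoidance_eq_zero i.2)
    convert continuous_ite_inter_Ioo_nonempty (continuous_cutPoint A B i)
      (continuous_cutPoint A B (i + 1)) (hs e)
      (continuous_avoidance (continuous_cutPoint A B) n (s e)) hhit
    exact mem_metCells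
  have hzero (x : Fin n → ℝ) (i : Fin n) (hi : x i = 0) : load i x = 0 := by
    refine sum_eq_zero fun e he => absurd (mem_filter.1 he).2 ?_
    rw [mem_metCells, cutPoint_succ, hi, mul_zero, add_zero, Set.Ioo_self, Set.inter_empty]
    exact Set.not_nonempty_empty
  obtain ⟨z, hz, hbal⟩ := exists_mem_stdSimplex_forall_eq hload fun x _ i hi k =>
    (hzero x i hi).trans_le (sum_nonneg fun e _ => avoidance_nonneg _ n _)
  exact ⟨cutPoint A B z, cutPoint_monotone hAB hz.1, cutPoint_zero A B z, cutPoint_last A B hz.2,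
    hbal⟩

lemma exists_subset_Ioo [Finite E] (hs : ∀ e, IsCompact (s e)) :
    ∃ A B : ℝ, A ≤ B ∧ ∀ e, s e ⊆ Set.Ioo A B := by
  obtain ⟨r, hr, hsub⟩ := (isCompact_iUnion hs).isBounded.subset_ball_lt 0 0
  rw [Real.ball_eq_Ioo] at hsub
  exact ⟨0 - r, 0 + r, by linarith, Set.iUnion_subset_iff.1 hsub⟩

theorem exists_pairwiseDisjoint_le_mul_card [Finite E] {d n : ℕ}
    (hs : ∀ e, IsDInterval d (s e)) (hne : ∀ e, (s e).Nonempty)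
    (hn : ∀ C : Finset ℝ, #C < n → ∃ e, ∀ x ∈ C, x ∉ s e) :
    ∃ M : Finset E, (M : Set E).PairwiseDisjoint s ∧ n ≤ (d ^ 2 - d + 1) * #M := by
  obtain rfl | hn₀ := eq_or_ne n 0
  · exact ⟨∅, by simp, Nat.zero_le _⟩
  have : NeZero n := ⟨hn₀⟩
  have := Fintype.ofFinite E
  have hcomp (e : E) : IsCompact (s e) := (hs e).isCompact
  obtain ⟨A, B, hAB, hsub⟩ := exists_subset_Ioo hcomp
  obtain ⟨q, hq, rfl, rfl, hbal⟩ := exists_forall_sum_avoidance_eq (n := n) hAB hcomp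
  have uncut {e : E} (he : 0 < avoidance q n (s e)) : ∀ j ≤ n, q j ∉ s e :=
    (avoidance_pos_iff (hcomp e).isClosed (hne e)).1 he
  have hpos : ∃ e, 0 < avoidance q n (s e) := by
    obtain ⟨e, he⟩ := hn ((Ioo 0 n).image q) <| card_image_le.trans_lt <| by
      rw [Nat.card_Ioo]
      lia
    refine ⟨e, (avoidance_pos_iff (hcomp e).isClosed (hne e)).2 fun j hj hje => ?_⟩
    obtain rfl | hj₀ := j.eq_zero_or_pos
    · exact (hsub e hje).1.false
    obtain rfl | hjn := hj.eq_or_lt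
    · exact (hsub e hje).2.false
    · exact he _ (mem_image_of_mem q (mem_Ioo.2 ⟨hj₀, hjn⟩)) hje
  obtain ⟨M, hM, hdisj, hcard⟩ := exists_pairwiseDisjoint_card_le_of_forall_sum_eq
    (fun e => avoidance_nonneg q n (s e))
    (fun e he => metCells_nonempty hq (hne e) (hsub e) (uncut he))
    (fun e he => (hs e).card_metCells_le hq (uncut he)) hbal hpos
  refine ⟨M, fun e he f hf hef => ?_, (Fintype.card_fin n).symm.trans_le hcard⟩
  exact disjoint_of_disjoint_metCells hq (hsub e) (uncut (hM e he)) (hdisj he hf hef)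

end DIntervals

section CoveringMatching

open Finset

variable {α : Type*} {H : Set (Set α)}

lemma exists_forall_notMem_of_card_lt_tau {C : Finset α} (hC : #C < tau H) :
    ∃ e ∈ H, ∀ x ∈ C, x ∉ e := by
  by_contra! h
  exact hC.not_ge (Nat.sInf_le ⟨C, h, rfl⟩)

lemma card_le_nu (hH : H.Finite) {M : Finset H}
    (hM : (M : Set H).PairwiseDisjoint Subtype.val) : #M ≤ nu H := by
  refine le_csSup ⟨#hH.toFinset, ?_⟩ ⟨M.map (.subtype _), ?_, ?_, card_map _⟩
  · rintro _ ⟨N, hN, -, rfl⟩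
    exact card_le_card fun e he => hH.mem_toFinset.2 (hN he)
  · simp
  · rw [coe_map]
    exact Set.InjOn.pairwiseDisjoint_image Subtype.val_injective.injOn |>.2 hM

end CoveringMatching

/-- For a finite hypergraph of `d`-intervals, `τ(H) ≤ (d² − d + 1)·ν(H)`. -/
theorem tau_le_d_sq_sub_d_add_one_mul_nu (d : ℕ) (hd : 1 ≤ d)
    (H : Set (Set ℝ)) (hfin : H.Finite)
    (hH : ∀ e ∈ H, IsDInterval d e ∧ e.Nonempty) :
    tau H ≤ (d ^ 2 - d + 1) * nu H := by
  have := hfin.to_subtype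
  obtain ⟨M, hM, hcard⟩ := exists_pairwiseDisjoint_le_mul_card (s := ((↑) : H → Set ℝ))
    (fun e => (hH e e.2).1) (fun e => (hH e e.2).2) fun C hC =>
      let ⟨e, he, heC⟩ := exists_forall_notMem_of_card_lt_tau hC
      ⟨⟨e, he⟩, heC⟩
  exact hcard.trans (Nat.mul_le_mul_left _ (card_le_nu hfin hM))
end

section
/- Let d ≥ 1, let H be a finite hypergraph of d-intervals, and let w : E(H) → ℕ be a weight system on the edges of H. Then τ*_w(H) ≤ 2d·ν_w(H). -/
/-- The weighted matching number `ν_w`: the maximum of `∑_{e ∈ M} w e` over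
matchings `M` in `H`. -/
noncomputable def nuW {α : Type*} (H : Set (Set α)) (w : Set α → ℕ) : ℕ :=
  sSup {m | ∃ M : Finset (Set α), ↑M ⊆ H ∧
    (M : Set (Set α)).PairwiseDisjoint id ∧ m = ∑ e ∈ M, w e}

/-- The fractional weighted covering number `τ*_w`: the infimum of `∑ₓ g x`
over finitely supported nonnegative `g : α → ℝ` with `∑_{x ∈ e} g x ≥ w e`
for every edge `e`. -/
noncomputable def tauStarW {α : Type*} (H : Set (Set α)) (w : Set α → ℕ) : ℝ :=
  sInf {t | ∃ g : α → ℝ, (Function.support g).Finite ∧ (∀ x, 0 ≤ g x) ∧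
    (∀ e ∈ H, (w e : ℝ) ≤ ∑ᶠ x ∈ e, g x) ∧ t = ∑ᶠ x, g x}

/-!
By linear programming duality it is enough to show that every fractional matching `f` whose
degrees `∑_{e ∋ x} f e` are at most `l` satisfies `∑ f e * w e ≤ 2 * d * l * ν_w`. If two
`d`-intervals meet, then one of them contains a left endpoint of the other; counting such incidences
with weights `f e * f e'` produces, in every subfamily, an edge `e` whose intersecting edges have
total `f`-weight at most `2 * d * l`. The local ratio method turns this into a matching: subtract
`w e` from the weights of all edges meeting `e`, recurse on the edges of positive weight, and
add `e` to the resulting matching unless some edge of it meets `e`.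
-/

section LocalRatio

section Residual

variable {ι G : Type*} [AddCommGroup G]

/-- The weights left over in one step of the local ratio method: `w e` is subtracted from the weight
of every `e'` in conflict with `e`. The relation `r` is compatibility, so the conflicts are the
pairs with `¬ r e e'`. -/
def residualWeight (r : ι → ι → Prop) [DecidableRel r] (w : ι → G) (e e' : ι) : G :=
  w e' - if r e e' then 0 else w e

variable {r : ι → ι → Prop} [DecidableRel r]

lemma sum_residualWeight_of_forall {w : ι → G} {e : ι} {M : Finset ι} (h : ∀ e' ∈ M, r e e') :
    ∑ e' ∈ M, residualWeight r w e e' = ∑ e' ∈ M, w e' :=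
  Finset.sum_congr rfl fun e' he' => by simp [residualWeight, h e' he']

variable [PartialOrder G] [IsOrderedAddMonoid G]

lemma sum_residualWeight_add_le {w : ι → G} {e : ι} {M : Finset ι} (hw : 0 ≤ w e)
    (h : ∃ e' ∈ M, ¬ r e e') :
    ∑ e' ∈ M, residualWeight r w e e' + w e ≤ ∑ e' ∈ M, w e' := by
  obtain ⟨e₀, he₀, hr₀⟩ := h
  have hle : w e ≤ ∑ e' ∈ M, if r e e' then 0 else w e := by
    simpa [hr₀] using Finset.single_le_sum (f := fun e' => if r e e' then 0 else w e)
      (fun e' _ => by split_ifs <;> simp [hw]) he₀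
  simp only [residualWeight, Finset.sum_sub_distrib]
  rw [sub_add, sub_le_self_iff, sub_nonneg]
  exact hle

lemma exists_pairwise_sum_residualWeight_add_le [DecidableEq ι] [Std.Symm r] {w : ι → G}
    {e : ι} (he : ¬ r e e) (hw : 0 ≤ w e) {M : Finset ι} (hM : (M : Set ι).Pairwise r) :
    ∃ M' ⊆ insert e M, (M' : Set ι).Pairwise r ∧
      ∑ e' ∈ M, residualWeight r w e e' + w e ≤ ∑ e' ∈ M', w e' := by
  by_cases h : ∃ e' ∈ M, ¬ r e e'
  · exact ⟨M, Finset.subset_insert e M, hM, sum_residualWeight_add_le hw h⟩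
  · push Not at h
    have heM : e ∉ M := fun h' => he (h e h')
    refine ⟨insert e M, subset_rfl, ?_, ?_⟩
    · rw [Finset.coe_insert]
      exact hM.insert_of_symm fun e' he' _ => h e' he'
    · rw [Finset.sum_insert heM, sum_residualWeight_of_forall h, add_comm]

end Residual

variable {ι R : Type*} [CommRing R] [LinearOrder R] [IsStrictOrderedRing R]
variable {r : ι → ι → Prop} [DecidableRel r]

lemma sum_mul_le_sum_mul_residualWeight_add {f w : ι → R} {e : ι} {S : Finset ι}
    (hf : ∀ e' ∈ S, 0 ≤ f e') :
    ∑ e' ∈ S, f e' * w e' ≤ ∑ e' ∈ S with 0 < residualWeight r w e e',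
      f e' * residualWeight r w e e' + (∑ e' ∈ S with ¬ r e e', f e') * w e := by
  rw [Finset.sum_filter, Finset.sum_filter, Finset.sum_mul, ← Finset.sum_add_distrib]
  refine Finset.sum_le_sum fun e' he' => ?_
  have hsplit : f e' * w e' =
      f e' * residualWeight r w e e' + (if ¬ r e e' then f e' else 0) * w e := by
    by_cases h : r e e' <;> simp [residualWeight, h, mul_sub]
  rw [hsplit]
  gcongr
  split_ifs with hpos
  · rfl
  · exact mul_nonpos_of_nonneg_of_nonpos (hf e' he') (not_lt.1 hpos)

theorem exists_pairwise_sum_mul_le_mul_sum [Std.Symm r] {f : ι → R} {C : R} {F : Finset ι}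
    (hirr : ∀ e ∈ F, ¬ r e e) (hf : ∀ e ∈ F, 0 ≤ f e)
    (hC : ∀ S ⊆ F, S.Nonempty → ∃ e ∈ S, ∑ e' ∈ S with ¬ r e e', f e' ≤ C)
    {w : ι → R} (hw : ∀ e ∈ F, 0 < w e) :
    ∃ M ⊆ F, (M : Set ι).Pairwise r ∧ ∑ e ∈ F, f e * w e ≤ C * ∑ e ∈ M, w e := by
  classical
  induction F using Finset.strongInduction generalizing w with
  | H F ih =>
  rcases F.eq_empty_or_nonempty with rfl | hF
  · exact ⟨∅, by simp⟩
  obtain ⟨e, he, hle⟩ := hC F subset_rfl hF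
  have hC0 : 0 ≤ C :=
    (Finset.sum_nonneg fun e' he' => hf e' (Finset.mem_filter.1 he').1).trans hle
  set S := {e' ∈ F | 0 < residualWeight r w e e'}
  have hSF : S ⊂ F := Finset.filter_ssubset.2 ⟨e, he, by simp [residualWeight, hirr e he]⟩
  obtain ⟨M, hMS, hM, hsum⟩ := ih S hSF (fun e' he' => hirr e' (hSF.subset he'))
    (fun e' he' => hf e' (hSF.subset he')) (fun T hT => hC T (hT.trans hSF.subset))
    (w := residualWeight r w e) (fun e' he' => (Finset.mem_filter.1 he').2)
  obtain ⟨M', hM'M, hM', hgain⟩ :=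
    exists_pairwise_sum_residualWeight_add_le (hirr e he) (hw e he).le hM
  refine ⟨M', hM'M.trans (Finset.insert_subset he (hMS.trans hSF.subset)), hM', ?_⟩
  calc ∑ e' ∈ F, f e' * w e'
      ≤ ∑ e' ∈ S, f e' * residualWeight r w e e' + (∑ e' ∈ F with ¬ r e e', f e') * w e :=
        sum_mul_le_sum_mul_residualWeight_add hf
    _ ≤ C * ∑ e' ∈ M, residualWeight r w e e' + C * w e :=
        add_le_add hsum (mul_le_mul_of_nonneg_right hle (hw e he).le)
    _ ≤ C * ∑ e' ∈ M', w e' := by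
        rw [← mul_add]
        exact mul_le_mul_of_nonneg_left hgain hC0

end LocalRatio

section Counting

variable {ι κ R : Type*}

lemma sum_filter_exists_le_sum_sum_filter [AddCommMonoid R] [PartialOrder R]
    [IsOrderedAddMonoid R] {p : κ → ι → Prop} [∀ x, DecidablePred (p x)] {L : Finset κ}
    [DecidablePred fun e => ∃ x ∈ L, p x e] {E : Finset ι} {f : ι → R} (hf : ∀ e ∈ E, 0 ≤ f e) :
    ∑ e ∈ E with ∃ x ∈ L, p x e, f e ≤ ∑ x ∈ L, ∑ e ∈ E with p x e, f e := by
  simp_rw [Finset.sum_filter]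
  rw [Finset.sum_comm]
  refine Finset.sum_le_sum fun e he => ?_
  have hterm : ∀ x ∈ L, 0 ≤ if p x e then f e else 0 := fun x _ => by
    split_ifs
    exacts [hf e he, le_rfl]
  split_ifs with h
  · obtain ⟨x, hx, hxe⟩ := h
    simpa [hxe] using Finset.single_le_sum hterm hx
  · exact Finset.sum_nonneg hterm

variable [CommRing R] [LinearOrder R] [IsStrictOrderedRing R]
variable {r s : ι → ι → Prop} [DecidableRel r] [DecidableRel s] {E : Finset ι} {f : ι → R}

lemma sum_mul_sum_filter_le_two_mul (hf : ∀ e ∈ E, 0 ≤ f e)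
    (hrs : ∀ e ∈ E, ∀ e' ∈ E, r e e' → s e e' ∨ s e' e) :
    ∑ e ∈ E, f e * ∑ e' ∈ E with r e e', f e' ≤
      2 * ∑ e ∈ E, f e * ∑ e' ∈ E with s e e', f e' := by
  have hpair : ∀ e ∈ E, ∀ e' ∈ E, (if r e e' then f e * f e' else 0) ≤
      (if s e e' then f e * f e' else 0) + if s e' e then f e' * f e else 0 := by
    intro e he e' he'
    have hmul := mul_nonneg (hf e he) (hf e' he')
    have hor := hrs e he e' he'
    rw [mul_comm (f e')]
    split_ifs <;> first | linarith | tauto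
  rw [two_mul]
  simp only [Finset.sum_filter, Finset.mul_sum, mul_ite, mul_zero]
  calc ∑ e ∈ E, ∑ e' ∈ E, (if r e e' then f e * f e' else 0)
      ≤ ∑ e ∈ E, ∑ e' ∈ E, ((if s e e' then f e * f e' else 0) +
          if s e' e then f e' * f e else 0) :=
        Finset.sum_le_sum fun e he => Finset.sum_le_sum (hpair e he)
    _ = ∑ e ∈ E, ∑ e' ∈ E, (if s e e' then f e * f e' else 0) +
          ∑ e ∈ E, ∑ e' ∈ E, if s e e' then f e * f e' else 0 := by
        simp only [Finset.sum_add_distrib]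
        rw [Finset.sum_comm (f := fun e e' => if s e' e then f e' * f e else 0)]

lemma exists_sum_filter_le_two_mul (hE : E.Nonempty) (hf : ∀ e ∈ E, 0 < f e)
    (hrs : ∀ e ∈ E, ∀ e' ∈ E, r e e' → s e e' ∨ s e' e) {C : R}
    (hC : ∀ e ∈ E, ∑ e' ∈ E with s e e', f e' ≤ C) :
    ∃ e ∈ E, ∑ e' ∈ E with r e e', f e' ≤ 2 * C := by
  have haverage : ∑ e ∈ E, f e * ∑ e' ∈ E with r e e', f e' ≤ ∑ e ∈ E, f e * (2 * C) :=
    calc ∑ e ∈ E, f e * ∑ e' ∈ E with r e e', f e'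
        ≤ 2 * ∑ e ∈ E, f e * ∑ e' ∈ E with s e e', f e' :=
          sum_mul_sum_filter_le_two_mul (fun e he => (hf e he).le) hrs
      _ ≤ 2 * ∑ e ∈ E, f e * C := by
          gcongr with e he
          exacts [(hf e he).le, hC e he]
      _ = ∑ e ∈ E, f e * (2 * C) := by
          simp only [Finset.mul_sum, mul_left_comm]
  obtain ⟨e, he, hle⟩ := Finset.exists_le_of_sum_le hE haverage
  exact ⟨e, he, le_of_mul_le_mul_left hle (hf e he)⟩

end Counting

section Duality

lemma map_nonneg_of_forall_mem_Ici_lt {E Φ : Type*} [AddCommMonoid E] [PartialOrder E]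
    [IsOrderedAddMonoid E] [FunLike Φ E ℝ] [AddMonoidHomClass Φ E ℝ] {φ : Φ} {a : E} {v : ℝ}
    (h : ∀ x ∈ Set.Ici a, v < φ x) {y : E} (hy : 0 ≤ y) : 0 ≤ φ y := by
  by_contra! hneg
  obtain ⟨n, hn⟩ := Archimedean.arch (φ a - v) (neg_pos.2 hneg)
  have hlt := h (a + n • y) (le_add_of_nonneg_right (nsmul_nonneg hy n))
  rw [map_add, map_nsmul] at hlt
  rw [smul_neg] at hn
  linarith

open Matrix in
theorem exists_mem_stdSimplex_le_mulVec {ι κ : Type*} [Fintype ι] [Fintype κ]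
    {A : Matrix ι κ ℝ} {w : ι → ℝ} (h : ∀ f : ι → ℝ, 0 ≤ f → ∃ k, f ⬝ᵥ w ≤ (f ᵥ* A) k) :
    ∃ g ∈ stdSimplex ℝ κ, w ≤ A *ᵥ g := by
  classical
  by_contra! hcon
  have hdisj : Disjoint (A.mulVecLin '' stdSimplex ℝ κ) (Set.Ici w) := by
    rw [Set.disjoint_left]
    rintro _ ⟨g, hg, rfl⟩ hwg
    exact hcon g hg hwg
  obtain ⟨φ, u, v, hu, huv, hv⟩ := geometric_hahn_banach_compact_closed
    ((convex_stdSimplex ℝ κ).linear_image A.mulVecLin)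
    ((isCompact_stdSimplex ℝ κ).image A.mulVecLin.continuous_of_finiteDimensional)
    (convex_Ici w) isClosed_Ici hdisj
  obtain ⟨f, hf⟩ := (dotProductEquiv ℝ ι).surjective φ.toLinearMap
  have hφ : ∀ y, φ y = f ⬝ᵥ y := fun y => (LinearMap.congr_fun hf y).symm
  have hf0 : 0 ≤ f := fun i => by
    have := map_nonneg_of_forall_mem_Ici_lt hv
      (Pi.single_nonneg.2 zero_le_one : 0 ≤ Pi.single i (1 : ℝ))
    rwa [hφ, dotProduct_single_one] at this
  obtain ⟨k, hk⟩ := h f hf0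
  have hcol : (f ᵥ* A) k < u := by
    have := hu _ ⟨_, single_mem_stdSimplex ℝ k, rfl⟩
    rwa [hφ, mulVecLin_apply, dotProduct_mulVec, dotProduct_single_one] at this
  have hvw : v < f ⬝ᵥ w := hφ w ▸ hv w Set.self_mem_Ici
  linarith

end Duality

section Hypergraph

variable {α : Type*}

lemma sum_le_nuW {H : Set (Set α)} (hfin : H.Finite) (w : Set α → ℕ) {M : Finset (Set α)}
    (hMH : ↑M ⊆ H) (hM : (M : Set (Set α)).PairwiseDisjoint id) : ∑ e ∈ M, w e ≤ nuW H w := by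
  refine le_csSup ⟨∑ e ∈ hfin.toFinset, w e, ?_⟩ ⟨M, hMH, hM, rfl⟩
  rintro _ ⟨M', hM'H, _, rfl⟩
  exact Finset.sum_le_sum_of_subset fun e he => hfin.mem_toFinset.2 (hM'H he)

open Classical in
lemma tauStarW_le_sum {H : Set (Set α)} {w : Set α → ℕ} {P : Finset α} {g : α → ℝ}
    (hg : ∀ x ∈ P, 0 ≤ g x) (hcover : ∀ e ∈ H, (w e : ℝ) ≤ ∑ x ∈ P with x ∈ e, g x) :
    tauStarW H w ≤ ∑ x ∈ P, g x := by
  have hsupp : Function.support ((P : Set α).indicator g) ⊆ P := Set.support_indicator_subset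
  have hsum : ∀ e : Set α, ∑ᶠ x ∈ e, (P : Set α).indicator g x = ∑ x ∈ P with x ∈ e, g x := by
    intro e
    rw [finsum_mem_def, finsum_eq_sum_of_support_subset _
      (((Set.support_indicator).trans_subset Set.inter_subset_right).trans hsupp),
      Finset.sum_filter]
    exact Finset.sum_congr rfl fun x hx => by simp [Set.indicator_apply, hx]
  refine csInf_le ⟨0, ?_⟩ ⟨(P : Set α).indicator g, P.finite_toSet.subset hsupp,
    Set.indicator_nonneg hg, fun e he => (hcover e he).trans_eq (hsum e).symm, ?_⟩
  · rintro _ ⟨g', _, hg', _, rfl⟩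
    exact finsum_nonneg hg'
  · simpa using (hsum Set.univ).symm

open Classical in
lemma tauStarW_le_of_forall_exists_sum_le {F : Finset (Set α)} {P : Finset α} {w : Set α → ℕ}
    {T : ℝ} (hT : 0 ≤ T)
    (h : ∀ f : Set α → ℝ, (∀ e ∈ F, 0 ≤ f e) →
      ∃ x ∈ P, ∑ e ∈ F, f e * w e ≤ T * ∑ e ∈ F with x ∈ e, f e) :
    tauStarW F w ≤ T := by
  let A : Matrix F P ℝ := .of fun e x => if (x : α) ∈ (e : Set α) then T else 0
  obtain ⟨g, ⟨hg0, hg1⟩, hgA⟩ := exists_mem_stdSimplex_le_mulVec (A := A)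
      (w := fun e => (w e : ℝ)) fun f hf => by
    let f' : Set α → ℝ := Function.extend Subtype.val f 0
    have hf' : ∀ e : F, f' e = f e := Subtype.val_injective.extend_apply f 0
    obtain ⟨x, hx, hle⟩ := h f' fun e he => (hf ⟨e, he⟩).trans_eq (hf' ⟨e, he⟩).symm
    refine ⟨⟨x, hx⟩, ?_⟩
    rw [Finset.sum_filter, Finset.mul_sum, ← Finset.sum_coe_sort F, ← Finset.sum_coe_sort F] at hle
    simpa [hf', A, dotProduct, Matrix.vecMul, mul_comm T] using hle
  let g' : α → ℝ := Function.extend Subtype.val (T • g) 0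
  have hg' : ∀ x : P, g' x = T * g x := Subtype.val_injective.extend_apply (T • g) 0
  have hcover : ∀ e ∈ F, (w e : ℝ) ≤ ∑ x ∈ P with x ∈ e, g' x := fun e he => by
    rw [Finset.sum_filter, ← Finset.sum_coe_sort P]
    simpa [hg', A, Matrix.mulVec, dotProduct] using hgA ⟨e, he⟩
  calc tauStarW F w
      ≤ ∑ x ∈ P, g' x := tauStarW_le_sum
        (fun x hx => (mul_nonneg hT (hg0 ⟨x, hx⟩)).trans_eq (hg' ⟨x, hx⟩).symm) hcover
    _ = T := by
      rw [← Finset.sum_coe_sort P]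
      simp only [hg', ← Finset.mul_sum, hg1, mul_one]

/-- A choice `L` of at most `d` pins for every edge of `H`, such that of any two intersecting edges
one contains a pin of the other. For `d`-intervals the left endpoints of the components are pins.
The pins of an edge need not lie on it. -/
structure IsPinning (d : ℕ) (H : Set (Set α)) (L : Set α → Finset α) : Prop where
  card_le : ∀ e ∈ H, (L e).card ≤ d
  exists_mem : ∀ e ∈ H, ∀ e' ∈ H, ¬ Disjoint e e' → (∃ x ∈ L e, x ∈ e') ∨ ∃ x ∈ L e', x ∈ e

namespace IsPinning

variable {d : ℕ} {L : Set α → Finset α} {F : Finset (Set α)}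

lemma mono {H H' : Set (Set α)} (hL : IsPinning d H L) (h : H' ⊆ H) : IsPinning d H' L :=
  ⟨fun e he => hL.card_le e (h he), fun e he e' he' => hL.exists_mem e (h he) e' (h he')⟩

lemma exists_mem_of_nonempty {H : Set (Set α)} (hL : IsPinning d H L) {e : Set α} (he : e ∈ H)
    (hne : e.Nonempty) : ∃ x ∈ L e, x ∈ e :=
  (hL.exists_mem e he e he (mt disjoint_self.1 hne.ne_empty)).elim id id

open Classical in
lemma exists_sum_not_disjoint_le (hL : IsPinning d F L) (hF : F.Nonempty) {f : Set α → ℝ}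
    (hf : ∀ e ∈ F, 0 < f e) {l : ℝ} (hl : 0 ≤ l)
    (hdeg : ∀ e ∈ F, ∀ x ∈ L e, ∑ e' ∈ F with x ∈ e', f e' ≤ l) :
    ∃ e ∈ F, ∑ e' ∈ F with ¬ Disjoint e e', f e' ≤ 2 * (d * l) := by
  refine exists_sum_filter_le_two_mul (s := fun e e' => ∃ x ∈ L e, x ∈ e') hF hf
    hL.exists_mem fun e he => ?_
  calc ∑ e' ∈ F with ∃ x ∈ L e, x ∈ e', f e'
      ≤ ∑ x ∈ L e, ∑ e' ∈ F with x ∈ e', f e' :=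
        sum_filter_exists_le_sum_sum_filter fun e' he' => (hf e' he').le
    _ ≤ (L e).card • l := Finset.sum_le_card_nsmul _ _ l (hdeg e he)
    _ ≤ d * l := by
        rw [nsmul_eq_mul]
        exact mul_le_mul_of_nonneg_right (mod_cast hL.card_le e he) hl

open Classical in
lemma sum_mul_le_mul_nuW (hL : IsPinning d F L) (hne : ∀ e ∈ F, e.Nonempty) {f : Set α → ℝ}
    (hf : ∀ e ∈ F, 0 ≤ f e) {l : ℝ} (hl : 0 ≤ l)
    (hdeg : ∀ e ∈ F, ∀ x ∈ L e, ∑ e' ∈ F with x ∈ e', f e' ≤ l) (w : Set α → ℕ) :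
    ∑ e ∈ F, f e * w e ≤ 2 * (d * l) * nuW F w := by
  set S := {e ∈ F | 0 < f e ∧ 0 < w e}
  have hSF : S ⊆ F := Finset.filter_subset _ F
  have hpos : ∀ e ∈ S, 0 < f e ∧ 0 < w e := fun e he => (Finset.mem_filter.1 he).2
  have hlight : ∀ E ⊆ S, E.Nonempty →
      ∃ e ∈ E, ∑ e' ∈ E with ¬ Disjoint e e', f e' ≤ 2 * (d * l) := by
    intro E hES hE
    refine (hL.mono (Finset.coe_subset.2 (hES.trans hSF))).exists_sum_not_disjoint_le hE
      (fun e he => (hpos e (hES he)).1) hl fun e he x hx => ?_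
    refine le_trans ?_ (hdeg e (hSF (hES he)) x hx)
    exact Finset.sum_le_sum_of_subset_of_nonneg
      (Finset.filter_subset_filter _ (hES.trans hSF))
      fun e' he' _ => hf e' (Finset.mem_filter.1 he').1
  obtain ⟨M, hMS, hM, hsum⟩ := exists_pairwise_sum_mul_le_mul_sum (r := Disjoint)
    (fun e he => mt disjoint_self.1 (hne e (hSF he)).ne_empty)
    (fun e he => (hpos e he).1.le) hlight
    (w := fun e => (w e : ℝ)) (fun e he => mod_cast (hpos e he).2)
  calc ∑ e ∈ F, f e * w e
      = ∑ e ∈ S, f e * w e := by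
        refine (Finset.sum_filter_of_ne fun e he hfw => ?_).symm
        rw [mul_ne_zero_iff, Nat.cast_ne_zero] at hfw
        exact ⟨(hf e he).lt_of_ne' hfw.1, Nat.pos_of_ne_zero hfw.2⟩
    _ ≤ 2 * (d * l) * ∑ e ∈ M, (w e : ℝ) := hsum
    _ ≤ 2 * (d * l) * nuW F w := by
        gcongr
        exact_mod_cast sum_le_nuW F.finite_toSet w (Finset.coe_subset.2 (hMS.trans hSF)) hM

end IsPinning

theorem tauStarW_le_two_d_mul_nuW_general {d : ℕ} {H : Set (Set α)} (hfin : H.Finite)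
    (hne : ∀ e ∈ H, e.Nonempty) {L : Set α → Finset α} (hL : IsPinning d H L) (w : Set α → ℕ) :
    tauStarW H w ≤ 2 * d * (nuW H w : ℝ) := by
  classical
  lift H to Finset (Set α) using hfin
  rcases H.eq_empty_or_nonempty with rfl | ⟨e₀, he₀⟩
  · exact (tauStarW_le_sum (P := ∅) (g := 0) (by simp) (by simp)).trans
      (by rw [Finset.sum_empty]; positivity)
  obtain ⟨x₀, hx₀, -⟩ := hL.exists_mem_of_nonempty he₀ (hne e₀ he₀)
  refine tauStarW_le_of_forall_exists_sum_le (P := H.biUnion L) (by positivity) fun f hf => ?_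
  let degree : α → ℝ := fun x => ∑ e ∈ H with x ∈ e, f e
  obtain ⟨x, hx, hmax⟩ := Finset.exists_max_image (H.biUnion L) degree
    ⟨x₀, Finset.mem_biUnion.2 ⟨e₀, he₀, hx₀⟩⟩
  have hdegree : 0 ≤ degree x := Finset.sum_nonneg fun e he => hf e (Finset.mem_filter.1 he).1
  have hbound := hL.sum_mul_le_mul_nuW hne hf hdegree
    (fun e he y hy => hmax y (Finset.mem_biUnion.2 ⟨e, he, hy⟩)) w
  exact ⟨x, hx, hbound.trans_eq (by ring)⟩

end Hypergraph

section DInterval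

lemma exists_leftEndpoint_mem_of_not_disjoint {α : Type*} [LinearOrder α] {e e' : Set α}
    {L L' : Finset α} (hL : ∀ y ∈ e, ∃ x ∈ L, x ≤ y ∧ Set.Icc x y ⊆ e)
    (hL' : ∀ y ∈ e', ∃ x ∈ L', x ≤ y ∧ Set.Icc x y ⊆ e') (h : ¬ Disjoint e e') :
    (∃ x ∈ L, x ∈ e') ∨ ∃ x ∈ L', x ∈ e := by
  obtain ⟨y, hy, hy'⟩ := Set.not_disjoint_iff.1 h
  obtain ⟨x, hx, hxy, hxe⟩ := hL y hy
  obtain ⟨x', hx', hxy', hxe'⟩ := hL' y hy'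
  rcases le_total x x' with hle | hle
  · exact .inr ⟨x', hx', hxe ⟨hle, hxy'⟩⟩
  · exact .inl ⟨x, hx, hxe' ⟨hle, hxy⟩⟩

lemma IsDInterval.exists_leftEndpoints {d : ℕ} {e : Set ℝ} (h : IsDInterval d e) :
    ∃ L : Finset ℝ, L.card ≤ d ∧ ∀ y ∈ e, ∃ x ∈ L, x ≤ y ∧ Set.Icc x y ⊆ e := by
  obtain ⟨n, a, b, hn, -, -, rfl⟩ := h
  refine ⟨Finset.univ.image a, Finset.card_image_le.trans (by simpa using hn), fun y hy => ?_⟩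
  obtain ⟨i, hai, hbi⟩ := Set.mem_iUnion.1 hy
  exact ⟨a i, Finset.mem_image_of_mem a (Finset.mem_univ i), hai,
    (Set.Icc_subset_Icc_right hbi).trans (Set.subset_iUnion (fun j => Set.Icc (a j) (b j)) i)⟩

lemma exists_isPinning_of_isDInterval {d : ℕ} {H : Set (Set ℝ)} (hH : ∀ e ∈ H, IsDInterval d e) :
    ∃ L, IsPinning d H L := by
  choose! L hcard hL using fun e he => (hH e he).exists_leftEndpoints
  exact ⟨L, hcard, fun e he e' he' =>
    exists_leftEndpoint_mem_of_not_disjoint (hL e he) (hL e' he')⟩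

end DInterval

/-- For a finite hypergraph of `d`-intervals with a weight system `w` on its
edges, `τ*_w(H) ≤ 2d·ν_w(H)`. -/
theorem tauStarW_le_two_d_mul_nuW (d : ℕ) (hd : 1 ≤ d)
    (H : Set (Set ℝ)) (hfin : H.Finite)
    (hH : ∀ e ∈ H, IsDInterval d e ∧ e.Nonempty) (w : Set ℝ → ℕ) :
    tauStarW H w ≤ 2 * d * (nuW H w : ℝ) := by
  obtain ⟨L, hL⟩ := exists_isPinning_of_isDInterval fun e he => (hH e he).1
  exact tauStarW_le_two_d_mul_nuW_general hfin (fun e he => (hH e he).2) hL w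
end
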